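/- arXiv:2504.05723 — 7 statements merged into one kernel-verified Lean document; each statement's English description precedes it below -/
import Mathlib

section
/- (Weighted Crouzeix–Palencia bound.) Let W be an hpd n×n complex matrix, B an n×n complex matrix, and q a polynomial with complex coefficients. Then for every x ∈ ℂⁿ, ‖q(B) x‖_W ≤ (1 + √2) · (sup_{z ∈ FOV^W(B)} |q(z)|) · ‖x‖_W. -/
open Polynomial Matrix
open scoped ComplexOrder

/-- The `W`-field of values of a matrix `B`:
`FOV^W(B) = { ⟨Bz, z⟩_W / ⟨z, z⟩_W : z ≠ 0 }` where `⟨u, v⟩_W = vᴴ W u`. -/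
def fovW {n : ℕ} (W B : Matrix (Fin n) (Fin n) ℂ) : Set ℂ :=
  {c : ℂ | ∃ z : Fin n → ℂ, z ≠ 0 ∧
    c = (star z ⬝ᵥ (W *ᵥ (B *ᵥ z))) / (star z ⬝ᵥ (W *ᵥ z))}

/-!
The `W`-inner product only changes the Hilbert space, so let `T` be a bounded operator on a complex
Hilbert space and `Ω` a bounded convex domain containing the closure of the numerical range of `T`.
Write `g(z)` for the Cauchy integral of `conj p` over the boundary of `Ω`, where `|p| ≤ 1` on `Ω`.

* On the boundary, `g` is an average of `conj p` against the double layer potential, which is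
  positive because `Ω` is convex; hence `|g| ≤ 1` on `Ω` by the maximum principle.
* The operator-valued double layer potential is positive as well, since the numerical range of `T`
  lies on one side of each supporting line; hence `‖p(T) + g(T)*‖ ≤ 2`.
* Let `M` be the supremum of `‖p(T)‖` over all such `p`. Expanding `(p(T) p(T)*)²` with
  `p(T)* = (p(T) + g(T)*)* - g(T)` gives `M⁴ ≤ 2M³ + M²`, because `p g p` is again bounded by `1`
  and is a limit of polynomials. Therefore `M ≤ 1 + √2`.

Shrinking `Ω` to the numerical range gives the bound for the numerical range itself.
-/

open Complex Filter MeasureTheory Metric Set Topology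
open scoped ComplexConjugate InnerProductSpace NNReal Real

section ChainRule

variable {A : Type*} [NormedAddCommGroup A] [NormedSpace ℂ A] {γ : ℝ → ℂ} {K : ℝ≥0}

theorem intervalIntegrable_deriv_of_lipschitzWith (hγ : LipschitzWith K γ) (a b : ℝ) :
    IntervalIntegrable (deriv γ) volume a b :=
  (intervalIntegrable_const (c := (K : ℝ))).mono_fun
    (aestronglyMeasurable_deriv γ _) <| .of_forall fun _ ↦
      (norm_deriv_le_of_lipschitz hγ).trans (le_abs_self _)

theorem exists_lipschitzOnWith_comp (hγ : LipschitzWith K γ) {a b : ℝ} {G : ℂ → A}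
    (hG : ∀ θ ∈ uIcc a b, ContDiffAt ℂ 1 G (γ θ)) :
    ∃ L, LipschitzOnWith L (G ∘ γ) (uIcc a b) := by
  refine LocallyLipschitzOn.exists_lipschitzOnWith_of_compact isCompact_uIcc fun θ hθ ↦ ?_
  obtain ⟨L, t, ht, hL⟩ := (hG θ hθ).exists_lipschitzOnWith
  exact ⟨L * K, γ ⁻¹' t, mem_nhdsWithin_of_mem_nhds (hγ.continuous.continuousAt ht),
    hL.comp hγ.lipschitzOnWith (mapsTo_preimage γ t)⟩

theorem intervalIntegrable_deriv_smul_deriv_comp (hγ : LipschitzWith K γ) {a b : ℝ} {G : ℂ → A}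
    (hG : ∀ θ ∈ uIcc a b, ContDiffAt ℂ 1 G (γ θ)) :
    IntervalIntegrable (fun θ ↦ deriv γ θ • deriv G (γ θ)) volume a b := by
  refine (intervalIntegrable_deriv_of_lipschitzWith hγ a b).smul_continuousOn
    fun θ hθ ↦ ContinuousAt.continuousWithinAt ?_
  have hderiv : ContinuousAt (deriv G) (γ θ) :=
    ((hG θ hθ).continuousAt_fderiv one_ne_zero).clm_apply continuousAt_const
  exact hderiv.comp hγ.continuous.continuousAt

theorem integral_deriv_smul_deriv_comp [CompleteSpace A] (hγ : LipschitzWith K γ) {a b : ℝ}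
    {G : ℂ → A} (hG : ∀ θ ∈ uIcc a b, ContDiffAt ℂ 1 G (γ θ)) :
    ∫ θ in a..b, deriv γ θ • deriv G (γ θ) = G (γ b) - G (γ a) := by
  obtain ⟨L, hL⟩ := exists_lipschitzOnWith_comp hγ hG
  refine (SeparatingDual.eq_iff_forall_dual_eq (R := ℝ)).2 fun l ↦ ?_
  have hac : AbsolutelyContinuousOnInterval (l ∘ G ∘ γ) a b :=
    (l.lipschitz.comp_lipschitzOnWith hL).absolutelyContinuousOnInterval
  calc l (∫ θ in a..b, deriv γ θ • deriv G (γ θ))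
      = ∫ θ in a..b, l (deriv γ θ • deriv G (γ θ)) := (l.intervalIntegral_comp_comm
        (intervalIntegrable_deriv_smul_deriv_comp hγ hG)).symm
    _ = ∫ θ in a..b, deriv (l ∘ G ∘ γ) θ := by
      refine intervalIntegral.integral_congr_ae ?_
      filter_upwards [hγ.ae_differentiableAt_real] with θ hθ hmem
      have hcomp := ((hG θ (uIoc_subset_uIcc hmem)).differentiableAt
        one_ne_zero).hasDerivAt.scomp θ hθ.hasDerivAt
      exact (l.hasFDerivAt.comp_hasDerivAt θ hcomp).deriv.symm
    _ = l (G (γ b) - G (γ a)) := by rw [hac.integral_deriv_eq_sub, map_sub]; rfl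

end ChainRule

section Boundary

/-- A bounded open convex subset of the plane, normalized to contain the origin so that its boundary
is a curve in polar coordinates. -/
structure IsConvexDomain (Ω : Set ℂ) : Prop where
  convex : Convex ℝ Ω
  isOpen : IsOpen Ω
  isBounded : Bornology.IsBounded Ω
  zero_mem : 0 ∈ Ω

/-- The distance from the origin to the boundary of `Ω` in the direction `exp (iθ)`. -/
noncomputable def boundaryRadius (Ω : Set ℂ) (θ : ℝ) : ℝ := (gauge Ω (circleMap 0 1 θ))⁻¹

/-- The parametrization of `frontier Ω` by the polar angle. It is only Lipschitz, so its derivative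
is controlled almost everywhere. -/
noncomputable def boundaryCurve (Ω : Set ℂ) (θ : ℝ) : ℂ := boundaryRadius Ω θ * circleMap 0 1 θ

/-- `ν` is a conormal of `Ω` at `ζ`: the real linear functional `w ↦ re (ν * w)` attains its maximum
over `closure Ω` at `ζ`, and this maximum is positive. -/
structure IsConormal (Ω : Set ℂ) (ζ ν : ℂ) : Prop where
  re_pos : 0 < (ν * ζ).re
  re_le : ∀ w ∈ closure Ω, (ν * w).re ≤ (ν * ζ).re

theorem IsConormal.ne_zero {Ω : Set ℂ} {ζ ν : ℂ} (hν : IsConormal Ω ζ ν) : ν ≠ 0 := by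
  rintro rfl
  simpa using hν.re_pos

namespace IsConvexDomain

variable {Ω : Set ℂ} (hΩ : IsConvexDomain Ω)

include hΩ

theorem mem_nhds_zero : Ω ∈ 𝓝 0 := hΩ.isOpen.mem_nhds hΩ.zero_mem

theorem isCompact_closure : IsCompact (closure Ω) := hΩ.isBounded.isCompact_closure

theorem smul_mem {w : ℂ} (hw : w ∈ closure Ω) {t : ℝ} (ht : t ∈ Ico (0 : ℝ) 1) : t • w ∈ Ω := by
  have hgauge := (gauge_le_one_iff_mem_closure hΩ.convex hΩ.mem_nhds_zero).2 hw
  rw [← hΩ.isOpen.interior_eq, ← gauge_lt_one_iff_mem_interior hΩ.convex hΩ.mem_nhds_zero,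
    gauge_smul_of_nonneg ht.1]
  exact (mul_le_of_le_one_right ht.1 hgauge).trans_lt ht.2

theorem gauge_pos {z : ℂ} (hz : z ≠ 0) : 0 < gauge Ω z :=
  (_root_.gauge_pos (absorbent_nhds_zero hΩ.mem_nhds_zero)
    ((NormedSpace.isVonNBounded_iff ℝ).2 hΩ.isBounded)).2 hz

theorem boundaryRadius_pos (θ : ℝ) : 0 < boundaryRadius Ω θ :=
  inv_pos.2 <| hΩ.gauge_pos <| circleMap_ne_center one_ne_zero

theorem exists_boundaryRadius_le : ∃ R, ∀ θ, boundaryRadius Ω θ ≤ R := by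
  obtain ⟨R, hR, hsub⟩ := hΩ.isBounded.subset_closedBall_lt 0 0
  refine ⟨R, fun θ ↦ inv_le_of_inv_le₀ hR ?_⟩
  simpa using le_gauge_of_subset_closedBall (absorbent_nhds_zero hΩ.mem_nhds_zero) hR.le hsub
    (x := circleMap 0 1 θ)

theorem exists_lipschitzWith_boundaryRadius : ∃ K, LipschitzWith K (boundaryRadius Ω) := by
  obtain ⟨R, hR⟩ := hΩ.exists_boundaryRadius_le
  obtain ⟨K, hK⟩ := hΩ.convex.lipschitz_gauge hΩ.mem_nhds_zero
  have hlip := hK.comp (lipschitzWith_circleMap 0 1)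
  refine ⟨_, LipschitzWith.of_dist_le' (K := R * R * (K * Real.nnabs 1 : ℝ≥0)) fun θ φ ↦ ?_⟩
  have hθ := hΩ.boundaryRadius_pos θ
  have hφ := hΩ.boundaryRadius_pos φ
  have hdist : dist (boundaryRadius Ω θ) (boundaryRadius Ω φ) =
      boundaryRadius Ω θ * boundaryRadius Ω φ *
        dist (gauge Ω (circleMap 0 1 θ)) (gauge Ω (circleMap 0 1 φ)) := by
    rw [boundaryRadius] at hθ hφ
    rw [boundaryRadius, boundaryRadius, Real.dist_eq, inv_sub_inv (inv_pos.1 hθ).ne'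
      (inv_pos.1 hφ).ne', abs_div, abs_of_pos (mul_pos (inv_pos.1 hθ) (inv_pos.1 hφ)), Real.dist_eq,
      abs_sub_comm]
    field_simp
  rw [hdist, mul_assoc (R * R)]
  gcongr
  · exact mul_nonneg (hθ.le.trans (hR θ)) (hθ.le.trans (hR θ))
  · exact hθ.le.trans (hR θ)
  · exact hR θ
  · exact hR φ
  · exact hlip.dist_le_mul θ φ

theorem exists_lipschitzWith_boundaryCurve : ∃ K, LipschitzWith K (boundaryCurve Ω) := by
  obtain ⟨R, hR⟩ := hΩ.exists_boundaryRadius_le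
  obtain ⟨K, hK⟩ := hΩ.exists_lipschitzWith_boundaryRadius
  refine ⟨_, LipschitzWith.of_dist_le' (K := K + R) fun θ φ ↦ ?_⟩
  have hcircle : ‖circleMap 0 1 θ - circleMap 0 1 φ‖ ≤ dist θ φ := by
    simpa [dist_eq_norm] using (lipschitzWith_circleMap 0 1).dist_le_mul θ φ
  calc dist (boundaryCurve Ω θ) (boundaryCurve Ω φ)
      = ‖((boundaryRadius Ω θ - boundaryRadius Ω φ : ℝ) : ℂ) * circleMap 0 1 θ
          + boundaryRadius Ω φ * (circleMap 0 1 θ - circleMap 0 1 φ)‖ := by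
        rw [dist_eq_norm, boundaryCurve, boundaryCurve]; push_cast; ring_nf
    _ ≤ dist (boundaryRadius Ω θ) (boundaryRadius Ω φ)
          + boundaryRadius Ω φ * ‖circleMap 0 1 θ - circleMap 0 1 φ‖ := by
        refine (norm_add_le _ _).trans_eq ?_
        simp [norm_real, -ofReal_sub, Real.dist_eq, abs_of_pos (hΩ.boundaryRadius_pos φ)]
    _ ≤ K * dist θ φ + R * dist θ φ := by
        gcongr
        · exact hK.dist_le_mul θ φ
        · exact (hΩ.boundaryRadius_pos φ).le.trans (hR φ)
        · exact hR φ
    _ = (K + R) * dist θ φ := by ring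

theorem continuous_boundaryCurve : Continuous (boundaryCurve Ω) :=
  hΩ.exists_lipschitzWith_boundaryCurve.choose_spec.continuous

omit hΩ in
theorem boundaryCurve_periodic : Function.Periodic (boundaryCurve Ω) (2 * π) := fun θ ↦ by
  simp only [boundaryCurve, boundaryRadius, periodic_circleMap 0 1 θ]

theorem boundaryCurve_mem_frontier (θ : ℝ) : boundaryCurve Ω θ ∈ frontier Ω := by
  rw [← gauge_eq_one_iff_mem_frontier hΩ.convex hΩ.mem_nhds_zero, boundaryCurve, ← real_smul,
    gauge_smul_of_nonneg (hΩ.boundaryRadius_pos θ).le]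
  exact inv_mul_cancel₀ (hΩ.gauge_pos (circleMap_ne_center one_ne_zero)).ne'

theorem exists_boundaryCurve_eq {z : ℂ} (hz : z ∈ frontier Ω) : ∃ θ, boundaryCurve Ω θ = z := by
  rw [← gauge_eq_one_iff_mem_frontier hΩ.convex hΩ.mem_nhds_zero] at hz
  have hpolar : z = ‖z‖ • circleMap 0 1 z.arg := by simp [circleMap]
  rw [hpolar, gauge_smul_of_nonneg (norm_nonneg z), smul_eq_mul] at hz
  refine ⟨z.arg, ?_⟩
  rw [boundaryCurve, boundaryRadius, ← eq_inv_of_mul_eq_one_left hz, ← real_smul, ← hpolar]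

theorem boundaryCurve_ne {θ φ : ℝ} (hθ : θ ∈ Ioo φ (φ + 2 * π)) :
    boundaryCurve Ω θ ≠ boundaryCurve Ω φ := fun heq ↦ by
  have hr (α : ℝ) : ‖boundaryCurve Ω α‖ = boundaryRadius Ω α := by
    simp [boundaryCurve, abs_of_pos (hΩ.boundaryRadius_pos α)]
  have hradius : boundaryRadius Ω θ = boundaryRadius Ω φ := by rw [← hr, ← hr, heq]
  rw [boundaryCurve, boundaryCurve, hradius,
    mul_right_inj' (ofReal_ne_zero.2 (hΩ.boundaryRadius_pos φ).ne'), ← periodic_circleMap 0 1 φ]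
    at heq
  have hle : φ ≤ φ + 2 * π := hθ.1.le.trans hθ.2.le
  have hinj := injOn_circleMap_of_abs_sub_le (c := 0) (R := 1) one_ne_zero
    (a := φ) (b := φ + 2 * π) (by simp [abs_of_pos Real.pi_pos])
  rw [uIoc_of_le hle] at hinj
  exact hθ.2.ne (hinj (Ioo_subset_Ioc_self hθ) (right_mem_Ioc.2 (hθ.1.trans hθ.2)) heq)

theorem exists_isConormal {ζ : ℂ} (hζ : ζ ∈ frontier Ω) : ∃ ν, IsConormal Ω ζ ν := by
  have hnot : ζ ∉ Ω := by
    rw [← hΩ.isOpen.interior_eq]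
    exact hζ.2
  obtain ⟨f, hf⟩ := RCLike.geometric_hahn_banach_open_point (𝕜 := ℂ) hΩ.convex hΩ.isOpen hnot
  have hmul (w : ℂ) : f w = f 1 * w := by
    rw [mul_comm, ← smul_eq_mul, ← map_smul, smul_eq_mul, mul_one]
  have hlt (w : ℂ) (hw : w ∈ Ω) : (f 1 * w).re < (f 1 * ζ).re := by
    rw [← hmul w, ← hmul ζ]
    exact hf w hw
  refine ⟨f 1, by simpa using hlt 0 hΩ.zero_mem, fun w hw ↦ ?_⟩
  exact le_on_closure (f := fun w ↦ (f 1 * w).re) (fun w hw ↦ (hlt w hw).le)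
    (by fun_prop) continuousOn_const hw

theorem ae_hasDerivAt_boundaryCurve : ∀ᵐ θ : ℝ, HasDerivAt (boundaryCurve Ω)
    ((deriv (boundaryRadius Ω) θ + boundaryRadius Ω θ * I) * circleMap 0 1 θ) θ := by
  obtain ⟨K, hK⟩ := hΩ.exists_lipschitzWith_boundaryRadius
  filter_upwards [hK.ae_differentiableAt_real] with θ hθ
  exact (hθ.hasDerivAt.ofReal_comp.fun_mul (hasDerivAt_circleMap 0 1 θ)).congr_deriv (by ring)

theorem re_mul_eq_zero_of_hasDerivAt {ν ζ' : ℂ} {θ : ℝ}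
    (hν : IsConormal Ω (boundaryCurve Ω θ) ν) (hθ : HasDerivAt (boundaryCurve Ω) ζ' θ) :
    (ν * ζ').re = 0 := by
  have hmax : IsLocalMax (fun φ ↦ (ν * boundaryCurve Ω φ).re) θ :=
    .of_forall fun φ ↦ hν.re_le _ (hΩ.boundaryCurve_mem_frontier φ).1
  exact hmax.hasDerivAt_eq_zero (reCLM.hasFDerivAt.comp_hasDerivAt θ (hθ.const_mul ν))

theorem ae_exists_deriv_boundaryCurve_eq : ∀ᵐ θ : ℝ, ∃ ν, IsConormal Ω (boundaryCurve Ω θ) ν ∧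
    ∃ c : ℝ, 0 < c ∧ deriv (boundaryCurve Ω) θ = c * I / ν := by
  filter_upwards [hΩ.ae_hasDerivAt_boundaryCurve] with θ hθ
  obtain ⟨ν, hν⟩ := hΩ.exists_isConormal (hΩ.boundaryCurve_mem_frontier θ)
  set ζ' := deriv (boundaryCurve Ω) θ with hζ'
  have hνζ' : ν * ζ' = (ν * ζ').im * I := by
    conv_lhs => rw [← re_add_im (ν * ζ'),
      hΩ.re_mul_eq_zero_of_hasDerivAt hν hθ.differentiableAt.hasDerivAt, ofReal_zero, zero_add]
  have harg : (ν * ζ').im * (ν * boundaryCurve Ω θ).re = normSq ν * boundaryRadius Ω θ ^ 2 := by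
    have him : (conj (boundaryCurve Ω θ) * ζ').im = boundaryRadius Ω θ ^ 2 := by
      have hunit : conj (circleMap 0 1 θ) * circleMap 0 1 θ = 1 := by
        simp [← normSq_eq_conj_mul_self, normSq_eq_norm_sq]
      have hprod : conj (boundaryCurve Ω θ) * ζ' = boundaryRadius Ω θ *
          (deriv (boundaryRadius Ω) θ + boundaryRadius Ω θ * I) := by
        rw [hζ', hθ.deriv, boundaryCurve, map_mul, conj_ofReal]
        linear_combination (boundaryRadius Ω θ *
          ((deriv (boundaryRadius Ω) θ : ℝ) + boundaryRadius Ω θ * I)) * hunit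
      simp [hprod, sq]
    calc (ν * ζ').im * (ν * boundaryCurve Ω θ).re
        = (conj (ν * boundaryCurve Ω θ) * ((ν * ζ').im * I)).im := by simp; ring
      _ = (normSq ν * (conj (boundaryCurve Ω θ) * ζ')).im := by
        rw [← hνζ', normSq_eq_conj_mul_self, map_mul]; ring_nf
      _ = normSq ν * boundaryRadius Ω θ ^ 2 := by rw [im_ofReal_mul, him]
  refine ⟨ν, hν, _, ?_, (eq_div_iff hν.ne_zero).2 ((mul_comm _ _).trans hνζ')⟩
  exact pos_of_mul_pos_left
    (harg ▸ mul_pos (normSq_pos.2 hν.ne_zero) (pow_pos (hΩ.boundaryRadius_pos θ) 2))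
    hν.re_pos.le

theorem integral_deriv_div_boundaryCurve :
    ∫ θ in (0)..2 * π, deriv (boundaryCurve Ω) θ / boundaryCurve Ω θ = 2 * π * I := by
  obtain ⟨K, hK⟩ := hΩ.exists_lipschitzWith_boundaryRadius
  have hlip : LipschitzWith (1 * K) (fun θ ↦ (boundaryRadius Ω θ : ℂ)) :=
    isometry_ofReal.lipschitz.comp hK
  have hslit (θ : ℝ) : (boundaryRadius Ω θ : ℂ) ∈ slitPlane :=
    ofReal_mem_slitPlane.2 (hΩ.boundaryRadius_pos θ)
  have hC1 : ∀ θ ∈ uIcc 0 (2 * π), ContDiffAt ℂ 1 log (boundaryRadius Ω θ) :=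
    fun θ _ ↦ contDiffAt_log (hslit θ)
  have hlog := integral_deriv_smul_deriv_comp hlip hC1
  have hperiod : boundaryRadius Ω (2 * π) = boundaryRadius Ω 0 := by
    simp [boundaryRadius, circleMap]
  rw [hperiod, sub_self] at hlog
  have hsplit : ∀ᵐ θ : ℝ, deriv (boundaryCurve Ω) θ / boundaryCurve Ω θ =
      deriv (fun θ ↦ (boundaryRadius Ω θ : ℂ)) θ • deriv log (boundaryRadius Ω θ) + I := by
    filter_upwards [hΩ.ae_hasDerivAt_boundaryCurve, hK.ae_differentiableAt_real] with θ hθ hr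
    have hr0 : (boundaryRadius Ω θ : ℂ) ≠ 0 := slitPlane_ne_zero (hslit θ)
    have he : circleMap 0 1 θ ≠ 0 := circleMap_ne_center one_ne_zero
    rw [hθ.deriv, hr.hasDerivAt.ofReal_comp.deriv,
      (hasStrictDerivAt_log (hslit θ)).hasDerivAt.deriv,
      boundaryCurve, smul_eq_mul]
    field_simp
  rw [intervalIntegral.integral_congr_ae (hsplit.mono fun _ h _ ↦ h),
    intervalIntegral.integral_add (intervalIntegrable_deriv_smul_deriv_comp hlip hC1)
      intervalIntegrable_const, hlog]
  simp

end IsConvexDomain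

end Boundary

section CauchyIntegral

variable {A : Type*} [NormedRing A] [NormedAlgebra ℂ A]

/-- The density `(2πi)⁻¹ (ζ - a)⁻¹ dζ` of the Cauchy integral over `frontier Ω`, pulled back to the
polar angle. -/
noncomputable def cauchyKernel (Ω : Set ℂ) (a : A) (θ : ℝ) : A :=
  ((2 * π * I)⁻¹ * deriv (boundaryCurve Ω) θ) • resolvent a (boundaryCurve Ω θ)

/-- The Cauchy integral `(2πi)⁻¹ ∮ f(ζ) (ζ - a)⁻¹ dζ` over `frontier Ω`, for `a` in a Banach
algebra. -/
noncomputable def cauchyIntegral (Ω : Set ℂ) (f : ℂ → ℂ) (a : A) : A :=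
  ∫ θ in (0)..2 * π, f (boundaryCurve Ω θ) • cauchyKernel Ω a θ

theorem commute_resolvent {a b : A} (hba : Commute b a) {z : ℂ} (hz : z ∈ resolventSet ℂ a) :
    Commute b (resolvent a z) := by
  rw [spectrum.resolvent_eq hz]
  exact Commute.units_inv_right (Commute.sub_right (Algebra.commute_algebraMap_right z b) hba)

theorem smul_resolvent {a : A} {z : ℂ} (hz : z ∈ resolventSet ℂ a) :
    z • resolvent a z = 1 + a * resolvent a z := by
  rw [← sub_eq_iff_eq_add, Algebra.smul_def, ← sub_mul]
  exact Ring.mul_inverse_cancel _ hz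

theorem map_resolvent {B : Type*} [NormedRing B] [NormedAlgebra ℂ B] (φ : A →ₐ[ℂ] B) {a : A} {z : ℂ}
    (hz : z ∈ resolventSet ℂ a) : φ (resolvent a z) = resolvent (φ a) z := by
  have hinv := congrArg φ (Ring.inverse_mul_cancel _ hz)
  have hunit := AlgHom.mem_resolventSet_apply φ hz
  simp only [map_mul, map_sub, AlgHom.commutes, map_one] at hinv
  exact hunit.mul_right_cancel (hinv.trans (Ring.inverse_mul_cancel _ hunit).symm)

theorem resolvent_smul_sub_resolvent_smul {a : A} {s t : ℝ} {z : ℂ}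
    (hs : z ∈ resolventSet ℂ (s • a)) (ht : z ∈ resolventSet ℂ (t • a)) :
    resolvent (t • a) z - resolvent (s • a) z = (t - s) • (a * resolvent (s • a) z ^ 2) +
      (t - s) ^ 2 • (resolvent (t • a) z * a * resolvent (s • a) z * a * resolvent (s • a) z) := by
  have hcomm : Commute a (resolvent (s • a) z) :=
    commute_resolvent (Commute.smul_right (.refl a) s) hs
  have hsub : resolvent (t • a) z - resolvent (s • a) z =
      (t - s) • (resolvent (t • a) z * a * resolvent (s • a) z) := by
    rw [spectrum.resolvent_sub_resolvent ht hs, ← sub_smul, mul_smul_comm, smul_mul_assoc]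
  have hsq : a * resolvent (s • a) z ^ 2 = resolvent (s • a) z * a * resolvent (s • a) z := by
    rw [sq, ← mul_assoc, hcomm.eq]
  calc resolvent (t • a) z - resolvent (s • a) z
      = (t - s) • ((resolvent (s • a) z + (resolvent (t • a) z - resolvent (s • a) z)) * a *
          resolvent (s • a) z) := by rw [add_sub_cancel, hsub]
    _ = _ := by
      rw [hsub, hsq, add_mul, add_mul, smul_add, smul_mul_assoc, smul_mul_assoc, smul_smul, sq]

namespace IsConvexDomain

variable {Ω : Set ℂ} (hΩ : IsConvexDomain Ω) {a : A}

include hΩ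

theorem boundaryCurve_notMem (θ : ℝ) : boundaryCurve Ω θ ∉ Ω := fun h ↦
  hΩ.isOpen.interior_eq ▸ (hΩ.boundaryCurve_mem_frontier θ).2 <| hΩ.isOpen.interior_eq.symm ▸ h

theorem boundaryCurve_mem_resolventSet (ha : spectrum ℂ a ⊆ Ω) (θ : ℝ) :
    boundaryCurve Ω θ ∈ resolventSet ℂ a :=
  spectrum.notMem_iff.1 fun h ↦ hΩ.boundaryCurve_notMem θ (ha h)

theorem spectrum_smul_subset (ha : spectrum ℂ a ⊆ Ω) {s : ℝ} (hs : s ∈ Icc (0 : ℝ) 1) :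
    spectrum ℂ (s • a) ⊆ Ω := by
  intro z hz
  obtain rfl | hs0 := eq_or_ne s 0
  · rw [zero_smul] at hz
    cases subsingleton_or_nontrivial A
    · simp at hz
    · rw [spectrum.zero_eq, mem_singleton_iff] at hz
      exact hz ▸ hΩ.zero_mem
  · rw [← Complex.coe_smul, ← Units.smul_mk0 (ofReal_ne_zero.2 hs0),
      spectrum.unit_smul_eq_smul] at hz
    obtain ⟨w, hw, rfl⟩ := hz
    exact hΩ.convex.smul_mem_of_zero_mem hΩ.zero_mem (ha hw) hs

end IsConvexDomain

variable [CompleteSpace A]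

theorem contDiffAt_resolvent {a : A} {z : ℂ} (hz : z ∈ resolventSet ℂ a) :
    ContDiffAt ℂ 1 (resolvent a) z := by
  have hsub : ContDiffAt ℂ 1 (fun w ↦ algebraMap ℂ A w - a) z :=
    (Algebra.linearMap ℂ A).toContinuousLinearMap.contDiff.contDiffAt.sub contDiffAt_const
  exact (contDiffAt_ringInverse ℂ hz.unit).comp z hsub

namespace IsConvexDomain

variable {Ω : Set ℂ} (hΩ : IsConvexDomain Ω) {a : A}

include hΩ

theorem continuous_resolvent_boundaryCurve (ha : spectrum ℂ a ⊆ Ω) :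
    Continuous fun θ ↦ resolvent a (boundaryCurve Ω θ) :=
  continuous_iff_continuousAt.2 fun θ ↦
    (contDiffAt_resolvent (hΩ.boundaryCurve_mem_resolventSet ha θ)).continuousAt.comp
      hΩ.continuous_boundaryCurve.continuousAt

theorem intervalIntegrable_cauchyKernel (ha : spectrum ℂ a ⊆ Ω) (α β : ℝ) :
    IntervalIntegrable (cauchyKernel Ω a) volume α β := by
  obtain ⟨K, hK⟩ := hΩ.exists_lipschitzWith_boundaryCurve
  exact ((intervalIntegrable_deriv_of_lipschitzWith hK α β).const_mul _).smul_continuousOn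
    (hΩ.continuous_resolvent_boundaryCurve ha).continuousOn

theorem intervalIntegrable_smul_cauchyKernel (ha : spectrum ℂ a ⊆ Ω) {f : ℂ → ℂ}
    (hf : Continuous f) (α β : ℝ) :
    IntervalIntegrable (fun θ ↦ f (boundaryCurve Ω θ) • cauchyKernel Ω a θ) volume α β :=
  (hΩ.intervalIntegrable_cauchyKernel ha α β).continuousOn_smul
    (hf.comp hΩ.continuous_boundaryCurve).continuousOn

theorem integral_deriv_mul_pow_eq_zero (n : ℕ) :
    ∫ θ in (0)..2 * π, deriv (boundaryCurve Ω) θ * boundaryCurve Ω θ ^ n = 0 := by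
  obtain ⟨K, hK⟩ := hΩ.exists_lipschitzWith_boundaryCurve
  have hFTC := integral_deriv_smul_deriv_comp hK (a := 0) (b := 2 * π)
    (G := fun z ↦ z ^ (n + 1) / (n + 1)) fun θ _ ↦ by fun_prop
  rw [boundaryCurve_periodic.eq, sub_self] at hFTC
  have hn : (n + 1 : ℂ) ≠ 0 := by exact_mod_cast n.succ_ne_zero
  simpa [hn] using hFTC

theorem integral_deriv_smul_resolvent_sq (ha : spectrum ℂ a ⊆ Ω) :
    ∫ θ in (0)..2 * π, deriv (boundaryCurve Ω) θ • resolvent a (boundaryCurve Ω θ) ^ 2 = 0 := by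
  obtain ⟨K, hK⟩ := hΩ.exists_lipschitzWith_boundaryCurve
  have hFTC := integral_deriv_smul_deriv_comp hK (a := 0) (b := 2 * π) (G := resolvent a)
    fun θ _ ↦ contDiffAt_resolvent (hΩ.boundaryCurve_mem_resolventSet ha θ)
  rw [boundaryCurve_periodic.eq, sub_self] at hFTC
  simpa [(spectrum.hasDerivAt_resolvent_const_left
    (hΩ.boundaryCurve_mem_resolventSet ha _)).deriv] using hFTC

theorem exists_norm_resolvent_smul_le (ha : spectrum ℂ a ⊆ Ω) :
    ∃ C, ∀ s ∈ Icc (0 : ℝ) 1, ∀ θ ∈ Icc 0 (2 * π), ‖resolvent (s • a) (boundaryCurve Ω θ)‖ ≤ C := by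
  have hcont : ContinuousOn (fun x : ℝ × ℝ ↦ resolvent (x.1 • a) (boundaryCurve Ω x.2))
      (Icc 0 1 ×ˢ Icc 0 (2 * π)) := fun x hx ↦ by
    have hmem := hΩ.boundaryCurve_mem_resolventSet (hΩ.spectrum_smul_subset ha hx.1) x.2
    have hsub : Continuous fun x : ℝ × ℝ ↦ algebraMap ℂ A (boundaryCurve Ω x.2) - x.1 • a :=
      ((continuous_algebraMap ℂ A).comp (hΩ.continuous_boundaryCurve.comp continuous_snd)).sub
        (continuous_fst.smul continuous_const)
    exact ((NormedRing.inverse_continuousAt hmem.unit).comp_of_eq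
      hsub.continuousAt rfl).continuousWithinAt
  obtain ⟨C, hC⟩ := (isCompact_Icc.prod isCompact_Icc).exists_bound_of_continuousOn hcont
  exact ⟨C, fun s hs θ hθ ↦ hC (s, θ) ⟨hs, hθ⟩⟩

theorem boundaryCurve_ne_zero (θ : ℝ) : boundaryCurve Ω θ ≠ 0 :=
  mul_ne_zero (ofReal_ne_zero.2 (hΩ.boundaryRadius_pos θ).ne') (circleMap_ne_center one_ne_zero)

theorem integral_cauchyKernel_zero : ∫ θ in (0)..2 * π, cauchyKernel Ω (0 : A) θ = 1 := by
  have hres (θ : ℝ) : resolvent (0 : A) (boundaryCurve Ω θ) =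
      algebraMap ℂ A (boundaryCurve Ω θ)⁻¹ := by
    have hmem : boundaryCurve Ω θ ∈ resolventSet ℂ (0 : ℂ) := by
      simpa [spectrum.mem_resolventSet_iff] using hΩ.boundaryCurve_ne_zero θ
    simpa [resolvent] using (map_resolvent (Algebra.ofId ℂ A) hmem).symm
  calc ∫ θ in (0)..2 * π, cauchyKernel Ω (0 : A) θ
      = ∫ θ in (0)..2 * π, ((2 * π * I)⁻¹ *
          (deriv (boundaryCurve Ω) θ / boundaryCurve Ω θ)) • (1 : A) := by
        simp [cauchyKernel, hres, Algebra.algebraMap_eq_smul_one, smul_smul, div_eq_mul_inv,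
          mul_assoc]
    _ = 1 := by
        rw [intervalIntegral.integral_smul_const, intervalIntegral.integral_const_mul,
          hΩ.integral_deriv_div_boundaryCurve, inv_mul_cancel₀ two_pi_I_ne_zero, one_smul]

theorem integral_cauchyKernel_smul_sub {s t : ℝ}
    (hs : spectrum ℂ (s • a) ⊆ Ω) (ht : spectrum ℂ (t • a) ⊆ Ω) :
    (∫ θ in (0)..2 * π, cauchyKernel Ω (t • a) θ) - ∫ θ in (0)..2 * π, cauchyKernel Ω (s • a) θ =
      (t - s) ^ 2 • ∫ θ in (0)..2 * π, ((2 * π * I)⁻¹ * deriv (boundaryCurve Ω) θ) •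
        (resolvent (t • a) (boundaryCurve Ω θ) * a * resolvent (s • a) (boundaryCurve Ω θ) * a *
          resolvent (s • a) (boundaryCurve Ω θ)) := by
  obtain ⟨K, hK⟩ := hΩ.exists_lipschitzWith_boundaryCurve
  have hRs := hΩ.continuous_resolvent_boundaryCurve hs
  have hRt := hΩ.continuous_resolvent_boundaryCurve ht
  have hInt {F : ℝ → A} (hF : Continuous F) : IntervalIntegrable
      (fun θ ↦ ((2 * π * I)⁻¹ * deriv (boundaryCurve Ω) θ) • F θ) volume 0 (2 * π) :=
    ((intervalIntegrable_deriv_of_lipschitzWith hK _ _).const_mul _).smul_continuousOn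
      hF.continuousOn
  have hsq : ∫ θ in (0)..2 * π, ((2 * π * I)⁻¹ * deriv (boundaryCurve Ω) θ) •
      (a * resolvent (s • a) (boundaryCurve Ω θ) ^ 2) = 0 := by
    have hmul := (ContinuousLinearMap.mul ℂ A a).intervalIntegral_comp_comm
      (hInt (hRs.pow 2))
    simpa [mul_smul, hΩ.integral_deriv_smul_resolvent_sq hs] using hmul
  rw [← intervalIntegral.integral_sub (hΩ.intervalIntegrable_cauchyKernel ht _ _)
    (hΩ.intervalIntegrable_cauchyKernel hs _ _)]
  simp only [cauchyKernel, ← smul_sub, resolvent_smul_sub_resolvent_smul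
    (hΩ.boundaryCurve_mem_resolventSet hs _) (hΩ.boundaryCurve_mem_resolventSet ht _)]
  simp only [smul_add]
  rw [intervalIntegral.integral_add (hInt (by fun_prop)) (hInt (by fun_prop))]
  simp only [smul_comm _ (t - s), smul_comm _ ((t - s) ^ 2), intervalIntegral.integral_smul, hsq,
    smul_zero, zero_add]

theorem exists_norm_integral_cauchyKernel_smul_sub_le (ha : spectrum ℂ a ⊆ Ω) :
    ∃ D, ∀ s ∈ Icc (0 : ℝ) 1, ∀ t ∈ Icc (0 : ℝ) 1,
      ‖(∫ θ in (0)..2 * π, cauchyKernel Ω (t • a) θ) -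
        ∫ θ in (0)..2 * π, cauchyKernel Ω (s • a) θ‖ ≤ D * (t - s) ^ 2 := by
  obtain ⟨C, hC⟩ := hΩ.exists_norm_resolvent_smul_le ha
  obtain ⟨K, hK⟩ := hΩ.exists_lipschitzWith_boundaryCurve
  refine ⟨‖(2 * π * I)⁻¹‖ * K * (C * ‖a‖ * C * ‖a‖ * C) * |2 * π - 0|, fun s hs t ht ↦ ?_⟩
  rw [hΩ.integral_cauchyKernel_smul_sub (hΩ.spectrum_smul_subset ha hs)
    (hΩ.spectrum_smul_subset ha ht), norm_smul, mul_comm, norm_pow,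
    Real.norm_eq_abs, sq_abs]
  gcongr
  refine intervalIntegral.norm_integral_le_of_norm_le_const fun θ hθ ↦ ?_
  rw [uIoc_of_le Real.two_pi_pos.le] at hθ
  have hCs := hC s hs θ (Ioc_subset_Icc_self hθ)
  have hCt := hC t ht θ (Ioc_subset_Icc_self hθ)
  have : 0 ≤ C := (norm_nonneg _).trans hCs
  rw [norm_smul, norm_mul]
  gcongr
  · exact norm_deriv_le_of_lipschitz hK
  · exact norm_mul_le_of_le (norm_mul_le_of_le (norm_mul_le_of_le
      (norm_mul_le_of_le hCt le_rfl) hCs) le_rfl) hCs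

theorem integral_cauchyKernel (ha : spectrum ℂ a ⊆ Ω) :
    ∫ θ in (0)..2 * π, cauchyKernel Ω a θ = 1 := by
  obtain ⟨D, hD⟩ := hΩ.exists_norm_integral_cauchyKernel_smul_sub_le ha
  let J (s : ℝ) : A := ∫ θ in (0)..2 * π, cauchyKernel Ω (s • a) θ
  have hJ : ∀ s ∈ Icc (0 : ℝ) 1, HasFDerivWithinAt J (0 : ℝ →L[ℝ] A) (Icc 0 1) s := fun s hs ↦ by
    have hO : (fun t ↦ J t - J s) =O[𝓝[Icc 0 1] s] fun t ↦ ‖t - s‖ ^ 2 :=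
      .of_bound D <| eventually_mem_nhdsWithin.mono fun t ht ↦ by simpa using hD s hs t ht
    simpa using (hO.hasFDerivWithinAt hs one_lt_two).add_const (J s)
  have hconst := (convex_Icc (0 : ℝ) 1).is_const_of_fderivWithin_eq_zero
    (fun s hs ↦ (hJ s hs).differentiableWithinAt)
    (fun s hs ↦ (hJ s hs).fderivWithin (uniqueDiffOn_Icc zero_lt_one s hs))
    (right_mem_Icc.2 zero_le_one) (left_mem_Icc.2 zero_le_one)
  simpa [J, hΩ.integral_cauchyKernel_zero] using hconst

theorem integral_pow_smul_cauchyKernel (ha : spectrum ℂ a ⊆ Ω) (n : ℕ) :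
    ∫ θ in (0)..2 * π, boundaryCurve Ω θ ^ n • cauchyKernel Ω a θ = a ^ n := by
  induction n with
  | zero => simpa using hΩ.integral_cauchyKernel ha
  | succ n ih =>
    obtain ⟨K, hK⟩ := hΩ.exists_lipschitzWith_boundaryCurve
    have hpow := hΩ.intervalIntegrable_smul_cauchyKernel ha (continuous_pow n) 0 (2 * π)
    have hmul : ∫ θ in (0)..2 * π, a * boundaryCurve Ω θ ^ n • cauchyKernel Ω a θ = a * a ^ n := by
      rw [← ih]
      exact (ContinuousLinearMap.mul ℂ A a).intervalIntegral_comp_comm hpow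
    have hker (θ : ℝ) : boundaryCurve Ω θ ^ (n + 1) • cauchyKernel Ω a θ =
        ((2 * π * I)⁻¹ * (deriv (boundaryCurve Ω) θ * boundaryCurve Ω θ ^ n)) • (1 : A) +
          a * boundaryCurve Ω θ ^ n • cauchyKernel Ω a θ := by
      rw [pow_succ, mul_smul, cauchyKernel, smul_comm (boundaryCurve Ω θ),
        smul_resolvent (hΩ.boundaryCurve_mem_resolventSet ha θ)]
      simp only [mul_smul_comm, smul_add, smul_smul]
      ring_nf
    have hInt : IntervalIntegrable (fun θ ↦ ((2 * π * I)⁻¹ * (deriv (boundaryCurve Ω) θ *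
        boundaryCurve Ω θ ^ n)) • (1 : A)) volume 0 (2 * π) :=
      (((intervalIntegrable_deriv_of_lipschitzWith hK _ _).mul_continuousOn
        (hΩ.continuous_boundaryCurve.pow n).continuousOn).const_mul _).smul_continuousOn
        continuousOn_const
    simp only [hker]
    rw [intervalIntegral.integral_add hInt (hpow.const_mul a), hmul,
      intervalIntegral.integral_smul_const,
      intervalIntegral.integral_const_mul, hΩ.integral_deriv_mul_pow_eq_zero]
    simp [pow_succ']

theorem cauchyIntegral_eval (ha : spectrum ℂ a ⊆ Ω) (p : ℂ[X]) :
    cauchyIntegral Ω p.eval a = aeval a p := by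
  induction p using Polynomial.induction_on' with
  | add p q hp hq =>
    rw [map_add, ← hp, ← hq, cauchyIntegral, cauchyIntegral, cauchyIntegral,
      ← intervalIntegral.integral_add]
    · simp only [eval_add, add_smul]
    · exact hΩ.intervalIntegrable_smul_cauchyKernel ha p.continuous _ _
    · exact hΩ.intervalIntegrable_smul_cauchyKernel ha q.continuous _ _
  | monomial n c =>
    simp only [cauchyIntegral, eval_monomial, mul_smul, intervalIntegral.integral_smul,
      hΩ.integral_pow_smul_cauchyKernel ha, aeval_monomial, ← Algebra.smul_def]

theorem map_cauchyIntegral {B : Type*} [NormedRing B] [NormedAlgebra ℂ B] [CompleteSpace B]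
    (φ : A →A[ℂ] B) (ha : spectrum ℂ a ⊆ Ω) {f : ℂ → ℂ} (hf : Continuous f) :
    φ (cauchyIntegral Ω f a) = cauchyIntegral Ω f (φ a) := by
  have hcomp := φ.toContinuousLinearMap.intervalIntegral_comp_comm
    (hΩ.intervalIntegrable_smul_cauchyKernel ha hf 0 (2 * π))
  have hres (θ : ℝ) : φ (resolvent a (boundaryCurve Ω θ)) = resolvent (φ a) (boundaryCurve Ω θ) :=
    map_resolvent (φ : A →ₐ[ℂ] B) (hΩ.boundaryCurve_mem_resolventSet ha θ)
  refine hcomp.symm.trans (intervalIntegral.integral_congr fun θ _ ↦ ?_)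
  simp [cauchyKernel, hres]

end IsConvexDomain

end CauchyIntegral

section ClosedSubalgebra

variable {A : Type*} [NormedRing A] [NormedAlgebra ℂ A] [CompleteSpace A]

/- The ray from `z` away from the origin joins `z` to infinity inside the resolvent set of `b`, and
passing to a closed subalgebra only fills in bounded components of the resolvent set. -/
theorem resolvent_mem_of_isClosed {S : Subalgebra ℂ A} (hS : IsClosed (S : Set A)) {b : A}
    (hb : b ∈ S) {z : ℂ} (hz0 : z ≠ 0)
    (hz : ∀ u : ℝ, 1 ≤ u → u • z ∈ resolventSet ℂ b) :
    resolvent b z ∈ S := by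
  have hray : (fun u : ℝ ↦ u • z) '' Ici 1 ⊆ (spectrum ℂ b)ᶜ := by
    rintro _ ⟨u, hu, rfl⟩
    exact not_not.2 (hz u hu)
  have hmem : z ∈ resolventSet ℂ (⟨b, hb⟩ : S) := by
    by_contra hz'
    have hbdd := Subalgebra.spectrum_isBounded_connectedComponentIn S ⟨b, hb⟩ hz'
    have hsub := (isPreconnected_Ici.image (fun u : ℝ ↦ u • z)
      (by fun_prop)).subset_connectedComponentIn
      ⟨1, self_mem_Ici, one_smul ℝ z⟩ hray
    obtain ⟨R, hR⟩ := (hbdd.subset hsub).exists_norm_le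
    have hle := hR _ (mem_image_of_mem _ (le_max_left 1 ((R + 1) / ‖z‖)))
    rw [norm_smul, Real.norm_of_nonneg (zero_le_one.trans (le_max_left _ _))] at hle
    have hgt : R + 1 ≤ max 1 ((R + 1) / ‖z‖) * ‖z‖ :=
      (div_le_iff₀ (norm_pos_iff.2 hz0)).1 (le_max_right _ _)
    linarith
  exact map_resolvent S.val hmem ▸ SetLike.coe_mem _

end ClosedSubalgebra

section Extremal

theorem norm_pow_four_le_of_norm_add_star_le {B : Type*} [NormedRing B] [StarRing B]
    [CStarRing B] {x y : B} {c : ℝ} (h : ‖x + star y‖ ≤ c) :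
    ‖x‖ ^ 4 ≤ c * ‖x‖ ^ 3 + ‖x * y * x‖ * ‖x‖ := by
  have hself : IsSelfAdjoint (x * star x) := .mul_star_self x
  calc ‖x‖ ^ 4 = ‖(x * star x) * (x * star x)‖ := by
        rw [hself.norm_mul_self, CStarRing.norm_self_mul_star]; ring
    _ = ‖x * star (x + star y) * x * star x - x * y * x * star x‖ := by
        rw [star_add, star_star]; noncomm_ring
    _ ≤ ‖x‖ * c * ‖x‖ * ‖x‖ + ‖x * y * x‖ * ‖x‖ := by
        refine norm_sub_le_of_le (norm_mul_le_of_le (norm_mul_le_of_le (norm_mul_le_of_le le_rfl ?_)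
          le_rfl) ?_) (norm_mul_le_of_le le_rfl ?_)
        · rwa [norm_star]
        · rw [norm_star]
        · rw [norm_star]
    _ = c * ‖x‖ ^ 3 + ‖x * y * x‖ * ‖x‖ := by ring

theorem le_one_add_sqrt_two_of_pow_four_le {M : ℝ} (hM : M ^ 4 ≤ 2 * M ^ 3 + M * M) :
    M ≤ 1 + √2 := by
  have h2 : √2 ^ 2 = 2 := Real.sq_sqrt zero_le_two
  by_contra! hlt
  have hpos : 0 < M := (by positivity : (0 : ℝ) < 1 + √2).trans hlt
  have hfactor : 0 < M ^ 2 * ((M - 1 - √2) * (M - 1 + √2)) := by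
    have := Real.sqrt_nonneg 2
    refine mul_pos (pow_pos hpos 2) (mul_pos ?_ ?_) <;> linarith
  have hexpand : M ^ 2 * ((M - 1 - √2) * (M - 1 + √2)) = M ^ 4 - (2 * M ^ 3 + M * M) := by
    linear_combination -M ^ 2 * h2
  linarith

variable {A B : Type*} [NormedRing A] [NormedAlgebra ℂ A] [NormedRing B] [NormedAlgebra ℂ B]

theorem norm_snd_le_of_mem_topologicalClosure {D : Subalgebra ℂ (A × B)} {C : ℝ}
    (hC : ∀ x ∈ D, ‖x.2‖ ≤ C * ‖x.1‖) {x : A × B} (hx : x ∈ D.topologicalClosure) :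
    ‖x.2‖ ≤ C * ‖x.1‖ :=
  le_on_closure (f := fun x : A × B ↦ ‖x.2‖) (g := fun x ↦ C * ‖x.1‖) hC (by fun_prop)
    (by fun_prop) hx

theorem norm_snd_le_of_norm_fst_le_one {D : Subalgebra ℂ (A × B)} {C M : ℝ}
    (hC : ∀ x ∈ D, ‖x.2‖ ≤ C * ‖x.1‖) (hM : ∀ x ∈ D, ‖x.1‖ ≤ 1 → ‖x.2‖ ≤ M) {x : A × B}
    (hx : x ∈ D) : ‖x.2‖ ≤ M * ‖x.1‖ := by
  obtain h0 | hpos := (norm_nonneg x.1).eq_or_lt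
  · simpa [← h0] using hC x hx
  · have hscaled := hM _ (D.smul_mem hx (‖x.1‖⁻¹ : ℂ)) (by simp [norm_smul, hpos.ne'])
    rw [Prod.smul_snd, norm_smul, norm_inv, norm_real, norm_norm] at hscaled
    rwa [mul_comm, ← inv_mul_le_iff₀ hpos]

variable [StarRing B] [CStarRing B]

/- The abstract extremal argument of Ransford and Schwenninger. The subalgebra `D` is the graph of a
bounded homomorphism `x.1 ↦ x.2`; its norm `M` satisfies `M ^ 4 ≤ 2 * M ^ 3 + M ^ 2`. -/
theorem norm_snd_le_one_add_sqrt_two {D : Subalgebra ℂ (A × B)} {C : ℝ}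
    (hC : ∀ x ∈ D, ‖x.2‖ ≤ C * ‖x.1‖)
    (hstar : ∀ x ∈ D, ‖x.1‖ ≤ 1 → ∀ c > 2, ∃ y ∈ D.topologicalClosure,
      ‖y.1‖ ≤ 1 ∧ ‖x.2 + star y.2‖ ≤ c) {x : A × B} (hx : x ∈ D) :
    ‖x.2‖ ≤ (1 + √2) * ‖x.1‖ := by
  let V : Set ℝ := (fun x : A × B ↦ ‖x.2‖) '' {x ∈ D | ‖x.1‖ ≤ 1}
  have hbdd : BddAbove V := by
    refine ⟨|C|, ?_⟩
    rintro _ ⟨x, ⟨hxD, hx1⟩, rfl⟩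
    exact (hC x hxD).trans <| (mul_le_mul_of_nonneg_right (le_abs_self C) (norm_nonneg _)).trans <|
      mul_le_of_le_one_right (abs_nonneg C) hx1
  have hle : ∀ x ∈ D, ‖x.1‖ ≤ 1 → ‖x.2‖ ≤ sSup V := fun x hxD hx1 ↦
    le_csSup hbdd ⟨x, ⟨hxD, hx1⟩, rfl⟩
  have hV0 : 0 ≤ sSup V := Real.sSup_nonneg (by rintro _ ⟨x, -, rfl⟩; exact norm_nonneg _)
  have hquartic : V ⊆ {u | u ^ 4 ≤ 2 * u ^ 3 + sSup V * u} := by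
    rintro _ ⟨x, ⟨hxD, hx1⟩, rfl⟩
    have hlim : Tendsto (fun c : ℝ ↦ c * ‖x.2‖ ^ 3 + sSup V * ‖x.2‖) (𝓝[>] 2)
        (𝓝 (2 * ‖x.2‖ ^ 3 + sSup V * ‖x.2‖)) :=
      tendsto_nhdsWithin_of_tendsto_nhds (Continuous.tendsto (by fun_prop) 2)
    refine ge_of_tendsto hlim (eventually_mem_nhdsWithin.mono fun c hc ↦ ?_)
    obtain ⟨y, hyD, hy1, hxy⟩ := hstar x hxD hx1 c hc
    have hxyx : ‖(x * y * x).2‖ ≤ sSup V := by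
      have hxD' := D.le_topologicalClosure hxD
      refine (norm_snd_le_of_mem_topologicalClosure (fun _ ↦ norm_snd_le_of_norm_fst_le_one hC hle)
        (mul_mem (mul_mem hxD' hyD) hxD')).trans (mul_le_of_le_one_right hV0 ?_)
      exact norm_mul_le_of_le (norm_mul_le_of_le hx1 hy1) hx1 |>.trans_eq (by norm_num)
    refine (norm_pow_four_le_of_norm_add_star_le hxy).trans ?_
    gcongr
    exact hxyx
  have hmem : sSup V ∈ closure V := csSup_mem_closure ⟨_, 0, ⟨D.zero_mem, by simp⟩, rfl⟩ hbdd
  have hsup := closure_minimal hquartic (isClosed_le (by fun_prop) (by fun_prop)) hmem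
  refine (norm_snd_le_of_norm_fst_le_one hC hle hx).trans ?_
  gcongr
  exact le_one_add_sqrt_two_of_pow_four_le hsup

end Extremal

section DoubleLayerPotential

/-- The Cauchy integral of `f` with its singularity subtracted: for Lipschitz `f` this expression is
continuous up to the boundary and extends the Cauchy integral from `Ω` to `closure Ω`. -/
noncomputable def regularizedCauchyIntegral (Ω : Set ℂ) (f : ℂ → ℂ) (z : ℂ) : ℂ :=
  f z + ∫ θ in (0)..2 * π, (f (boundaryCurve Ω θ) - f z) • cauchyKernel Ω z θ

theorem cauchyKernel_apply (Ω : Set ℂ) (z : ℂ) (θ : ℝ) : cauchyKernel Ω z θ =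
    (2 * π * I)⁻¹ * deriv (boundaryCurve Ω) θ * (boundaryCurve Ω θ - z)⁻¹ := by
  simp [cauchyKernel, resolvent]

theorem cauchyKernel_eq_deriv_smul_deriv_log {Ω : Set ℂ} {z ν : ℂ} {θ : ℝ}
    (hslit : ν * (z - boundaryCurve Ω θ) ∈ slitPlane) :
    cauchyKernel Ω z θ = (2 * π * I)⁻¹ * (deriv (boundaryCurve Ω) θ •
      deriv (fun w ↦ log (ν * (z - w))) (boundaryCurve Ω θ)) := by
  have hderiv : HasDerivAt (fun w ↦ log (ν * (z - w))) (ν * (-1) / (ν * (z - boundaryCurve Ω θ)))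
      (boundaryCurve Ω θ) :=
    (((hasDerivAt_id _).const_sub z).const_mul ν).clog hslit
  rw [cauchyKernel_apply, hderiv.deriv, smul_eq_mul, ← neg_sub (boundaryCurve Ω θ) z,
    mul_div_mul_left _ _ (left_ne_zero_of_mul (slitPlane_ne_zero hslit)), neg_div_neg_eq, one_div,
    mul_assoc]

theorem spectrum_subset_of_mem {Ω : Set ℂ} {z : ℂ} (hz : z ∈ Ω) : spectrum ℂ z ⊆ Ω :=
  (spectrum.scalar_eq z).trans_subset (singleton_subset_iff.2 hz)

theorem cauchyKernel_periodic (Ω : Set ℂ) (z : ℂ) :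
    Function.Periodic (cauchyKernel Ω z) (2 * π) := fun θ ↦ by
  have hderiv : deriv (boundaryCurve Ω) (θ + 2 * π) = deriv (boundaryCurve Ω) θ := by
    rw [← deriv_comp_add_const, funext IsConvexDomain.boundaryCurve_periodic]
  rw [cauchyKernel_apply, cauchyKernel_apply, hderiv, IsConvexDomain.boundaryCurve_periodic]

namespace IsConvexDomain

variable {Ω : Set ℂ} (hΩ : IsConvexDomain Ω)

include hΩ

theorem regularizedCauchyIntegral_eq {f : ℂ → ℂ} (hf : Continuous f) {z : ℂ} (hz : z ∈ Ω) :
    regularizedCauchyIntegral Ω f z = cauchyIntegral Ω f z := by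
  have hz' := spectrum_subset_of_mem hz
  simp only [regularizedCauchyIntegral, sub_smul]
  rw [intervalIntegral.integral_sub (hΩ.intervalIntegrable_smul_cauchyKernel hz' hf _ _)
      (hΩ.intervalIntegrable_smul_cauchyKernel hz' (continuous_const (y := f z)) _ _),
    intervalIntegral.integral_smul, hΩ.integral_cauchyKernel hz', smul_eq_mul, mul_one,
    add_sub_cancel]
  rfl

theorem norm_sub_smul_cauchyKernel_le {f : ℂ → ℂ} {L K : ℝ≥0} (hf : LipschitzOnWith L f (closure Ω))
    (hK : LipschitzWith K (boundaryCurve Ω)) {z : ℂ} (hz : z ∈ closure Ω) (θ : ℝ) :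
    ‖(f (boundaryCurve Ω θ) - f z) • cauchyKernel Ω z θ‖ ≤ ‖(2 * π * I)⁻¹‖ * K * L := by
  have hdiff : ‖f (boundaryCurve Ω θ) - f z‖ * ‖boundaryCurve Ω θ - z‖⁻¹ ≤ L :=
    div_le_of_le_mul₀ (norm_nonneg _) L.2
      (hf.norm_sub_le (hΩ.boundaryCurve_mem_frontier θ).1 hz)
  calc ‖(f (boundaryCurve Ω θ) - f z) • cauchyKernel Ω z θ‖
      = ‖(2 * π * I)⁻¹‖ * ‖deriv (boundaryCurve Ω) θ‖ *
          (‖f (boundaryCurve Ω θ) - f z‖ * ‖boundaryCurve Ω θ - z‖⁻¹) := by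
        rw [cauchyKernel_apply, norm_smul, norm_mul, norm_mul, norm_inv (_ - _)]; ring
    _ ≤ ‖(2 * π * I)⁻¹‖ * K * L := by
        gcongr
        exact norm_deriv_le_of_lipschitz hK

theorem ae_boundaryCurve_ne (z : ℂ) : ∀ᵐ θ : ℝ, θ ∈ uIoc 0 (2 * π) → boundaryCurve Ω θ ≠ z := by
  have hsub : {θ ∈ uIoc 0 (2 * π) | boundaryCurve Ω θ = z}.Subsingleton := by
    rw [uIoc_of_le Real.two_pi_pos.le]
    rintro θ ⟨hθ, hθz⟩ φ ⟨hφ, hφz⟩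
    by_contra hne
    obtain hlt | hlt := lt_or_gt_of_ne hne
    · exact hΩ.boundaryCurve_ne ⟨hlt, by linarith [hθ.1, hφ.2]⟩ (hφz.trans hθz.symm)
    · exact hΩ.boundaryCurve_ne ⟨hlt, by linarith [hφ.1, hθ.2]⟩ (hθz.trans hφz.symm)
  filter_upwards [measure_eq_zero_iff_ae_notMem.1 (hsub.measure_zero volume)] with θ hθ hmem heq
  exact hθ ⟨hmem, heq⟩

theorem aestronglyMeasurable_sub_smul_cauchyKernel {f : ℂ → ℂ}
    (hf : ContinuousOn f (closure Ω)) (z : ℂ) (μ : Measure ℝ) :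
    AEStronglyMeasurable (fun θ ↦ (f (boundaryCurve Ω θ) - f z) • cauchyKernel Ω z θ) μ := by
  have hcomp : Continuous fun θ ↦ f (boundaryCurve Ω θ) :=
    hf.comp_continuous hΩ.continuous_boundaryCurve fun θ ↦ (hΩ.boundaryCurve_mem_frontier θ).1
  have hcurve := hΩ.continuous_boundaryCurve
  simp only [cauchyKernel_apply]
  exact ((hcomp.sub continuous_const).measurable.mul <| (measurable_const.mul
    (measurable_deriv _)).mul (hcurve.sub continuous_const).measurable.inv).aestronglyMeasurable

theorem intervalIntegrable_sub_smul_cauchyKernel {f : ℂ → ℂ} {L : ℝ≥0}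
    (hf : LipschitzOnWith L f (closure Ω)) {z : ℂ} (hz : z ∈ closure Ω) : IntervalIntegrable
      (fun θ ↦ (f (boundaryCurve Ω θ) - f z) • cauchyKernel Ω z θ) volume 0 (2 * π) := by
  obtain ⟨K, hK⟩ := hΩ.exists_lipschitzWith_boundaryCurve
  exact intervalIntegrable_const.mono_fun
    (hΩ.aestronglyMeasurable_sub_smul_cauchyKernel hf.continuousOn z _)
    (.of_forall fun θ ↦ (hΩ.norm_sub_smul_cauchyKernel_le hf hK hz θ).trans (Real.le_norm_self _))

theorem continuousOn_regularizedCauchyIntegral {f : ℂ → ℂ} {L : ℝ≥0}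
    (hf : LipschitzOnWith L f (closure Ω)) :
    ContinuousOn (regularizedCauchyIntegral Ω f) (closure Ω) := fun z hz ↦ by
  obtain ⟨K, hK⟩ := hΩ.exists_lipschitzWith_boundaryCurve
  refine (hf.continuousOn z hz).add <|
    intervalIntegral.continuousWithinAt_of_dominated_interval
      (.of_forall fun w ↦ hΩ.aestronglyMeasurable_sub_smul_cauchyKernel hf.continuousOn w _)
      (eventually_mem_nhdsWithin.mono fun w hw ↦ .of_forall fun θ _ ↦
        hΩ.norm_sub_smul_cauchyKernel_le hf hK hw θ) intervalIntegrable_const ?_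
  filter_upwards [hΩ.ae_boundaryCurve_ne z] with θ hθ hmem
  simp only [cauchyKernel_apply]
  exact (continuousWithinAt_const.sub (hf.continuousOn z hz)).mul <| continuousWithinAt_const.mul <|
    (continuousWithinAt_const.sub continuousWithinAt_id).inv₀ (sub_ne_zero.2 (hθ hmem))

theorem exists_pos_le_norm_boundaryCurve_sub {z : ℂ} (hz : z ∈ Ω) :
    ∃ δ > 0, ball z δ ⊆ Ω ∧ ∀ w ∈ ball z δ, ∀ θ, δ ≤ ‖boundaryCurve Ω θ - w‖ := by
  obtain ⟨ε, hε, hball⟩ := Metric.isOpen_iff.1 hΩ.isOpen z hz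
  refine ⟨ε / 2, half_pos hε, (ball_subset_ball (half_le_self hε.le)).trans hball, fun w hw θ ↦ ?_⟩
  have hfar : ε ≤ dist (boundaryCurve Ω θ) z := by
    by_contra! h
    exact hΩ.boundaryCurve_notMem θ (hball h)
  rw [← dist_eq_norm]
  linarith [dist_triangle (boundaryCurve Ω θ) w z, mem_ball.1 hw]

theorem differentiableOn_cauchyIntegral {f : ℂ → ℂ} (hf : Continuous f) :
    DifferentiableOn ℂ (cauchyIntegral Ω f) Ω := fun z hz ↦ by
  obtain ⟨K, hK⟩ := hΩ.exists_lipschitzWith_boundaryCurve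
  have hcurve := hΩ.continuous_boundaryCurve
  obtain ⟨M, hM⟩ := isCompact_Icc.exists_bound_of_continuousOn
    (s := Icc 0 (2 * π)) (hf.comp hcurve).continuousOn
  obtain ⟨δ, hδ, hmem, hdist⟩ := hΩ.exists_pos_le_norm_boundaryCurve_sub hz
  have hInt {w : ℂ} (hw : w ∈ ball z δ) := hΩ.intervalIntegrable_smul_cauchyKernel
    (spectrum_subset_of_mem (hmem hw)) hf 0 (2 * π)
  have hnhds := ball_mem_nhds z hδ
  refine (intervalIntegral.hasDerivAt_integral_of_dominated_loc_of_deriv_le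
    (F' := fun w θ ↦ f (boundaryCurve Ω θ) •
      ((2 * π * I)⁻¹ * deriv (boundaryCurve Ω) θ * ((boundaryCurve Ω θ - w) ^ 2)⁻¹))
    (bound := fun _ ↦ M * (‖(2 * π * I)⁻¹‖ * K * (δ ^ 2)⁻¹)) hnhds
    (eventually_of_mem hnhds fun w hw ↦ (intervalIntegrable_iff.1 (hInt hw)).aestronglyMeasurable)
    (hInt (mem_of_mem_nhds hnhds)) ?_ (.of_forall fun θ hθ w hw ↦ ?_) intervalIntegrable_const
    (.of_forall fun θ _ w hw ↦ ?_)).2.differentiableAt.differentiableWithinAt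
  · exact ((hf.comp hcurve).measurable.smul <| (measurable_const.mul (measurable_deriv _)).mul
      ((hcurve.sub continuous_const).pow 2).measurable.inv).aestronglyMeasurable
  · rw [uIoc_of_le Real.two_pi_pos.le] at hθ
    rw [norm_smul, norm_mul, norm_mul, norm_inv (_ ^ 2), norm_pow]
    gcongr
    · exact (norm_nonneg _).trans (hM θ (Ioc_subset_Icc_self hθ))
    · exact hM θ (Ioc_subset_Icc_self hθ)
    · exact norm_deriv_le_of_lipschitz hK
    · exact hdist w hw θ
  · have hne : boundaryCurve Ω θ - w ≠ 0 := norm_pos_iff.1 (hδ.trans_le (hdist w hw θ))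
    simp only [cauchyKernel_apply]
    exact ((((hasDerivAt_id w).const_sub _).inv hne).const_mul _).const_mul _
      |>.congr_deriv (by simp)

end IsConvexDomain

end DoubleLayerPotential

section BoundaryEstimate

theorem integral_le_of_forall_integral_le {g : ℝ → ℝ} {a b m : ℝ} (hab : a < b)
    (hg : ∀ᵐ θ, 0 ≤ g θ) (hInt : ∀ α β, a < α → α ≤ β → β < b → IntervalIntegrable g volume α β)
    (hle : ∀ α β, a < α → α ≤ β → β < b → ∫ θ in α..β, g θ ≤ m) :
    IntervalIntegrable g volume a b ∧ ∫ θ in a..b, g θ ≤ m := by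
  let ε (n : ℕ) : ℝ := (b - a) / 2 * (1 / (n + 1))
  have hε (n : ℕ) : 0 < ε n := by have := sub_pos.2 hab; positivity
  have hεle (n : ℕ) : a + ε n ≤ b - ε n := by
    have : ε n ≤ (b - a) / 2 :=
      mul_le_of_le_one_right (by linarith) ((div_le_one (by positivity)).2 (by simp))
    linarith
  have hεlim : Tendsto ε atTop (𝓝 0) := by
    simpa [ε] using tendsto_one_div_add_atTop_nhds_zero_nat.const_mul ((b - a) / 2)
  have ha : Tendsto (a + ε ·) atTop (𝓝 a) := by simpa using hεlim.const_add a
  have hb : Tendsto (b - ε ·) atTop (𝓝 b) := by simpa using hεlim.const_sub b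
  have hi (n : ℕ) := hInt _ _ (lt_add_of_pos_right a (hε n)) (hεle n) (sub_lt_self b (hε n))
  have hl (n : ℕ) := hle _ _ (lt_add_of_pos_right a (hε n)) (hεle n) (sub_lt_self b (hε n))
  simp only [intervalIntegrable_iff_integrableOn_Ioc_of_le (hεle _)] at hi
  simp only [intervalIntegral.integral_of_le (hεle _)] at hl
  have hIoc : IntegrableOn g (Ioc a b) := by
    refine integrableOn_Ioc_of_intervalIntegral_norm_bounded (I := m) hi ha hb
      (.of_forall fun n ↦ ?_)
    refine (integral_congr_ae <| ae_restrict_of_ae ?_).trans_le (hl n)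
    exact hg.mono fun θ hθ ↦ Real.norm_of_nonneg hθ
  refine ⟨(intervalIntegrable_iff_integrableOn_Ioc_of_le hab.le).2 hIoc, ?_⟩
  rw [intervalIntegral.integral_of_le hab.le]
  refine le_of_tendsto ((aecover_Ioc_of_Ioc ha hb).integral_tendsto_of_countably_generated hIoc)
    (.of_forall fun n ↦ ?_)
  rw [Measure.restrict_restrict measurableSet_Ioc, inter_eq_left.2 (Ioc_subset_Ioc
    (le_add_of_nonneg_right (hε n).le) (sub_le_self b (hε n).le))]
  exact hl n

theorem IsConormal.re_mul_sub_nonneg {Ω : Set ℂ} {ζ ν w : ℂ} (hν : IsConormal Ω ζ ν)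
    (hw : w ∈ closure Ω) : 0 ≤ (ν * (ζ - w)).re := by
  rw [mul_sub, sub_re]
  exact sub_nonneg.2 (hν.re_le w hw)

theorem IsConormal.mul_sub_mem_slitPlane {Ω : Set ℂ} {ζ ν w : ℂ} (hν : IsConormal Ω ζ ν)
    (hw : w ∈ closure Ω) (hne : w ≠ ζ) : ν * (ζ - w) ∈ slitPlane := by
  have h0 := mul_ne_zero hν.ne_zero (sub_ne_zero.2 hne.symm)
  exact (hν.re_mul_sub_nonneg hw).lt_or_eq.imp id fun hre him ↦ h0 (Complex.ext hre.symm him)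

namespace IsConvexDomain

variable {Ω : Set ℂ} (hΩ : IsConvexDomain Ω)

include hΩ

theorem ae_re_cauchyKernel_nonneg {z : ℂ} (hz : z ∈ closure Ω) :
    ∀ᵐ θ, 0 ≤ (cauchyKernel Ω z θ).re := by
  filter_upwards [hΩ.ae_exists_deriv_boundaryCurve_eq] with θ ⟨ν, hν, c, hc, hderiv⟩
  have hkernel : cauchyKernel Ω z θ =
      (c / (2 * π) : ℝ) * (ν * (boundaryCurve Ω θ - z))⁻¹ := by
    rw [cauchyKernel_apply, hderiv, _root_.mul_inv]
    push_cast
    field_simp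
  rw [hkernel, re_ofReal_mul, inv_re]
  exact mul_nonneg (by positivity) (div_nonneg (hν.re_mul_sub_nonneg hz) (normSq_nonneg _))

/- `2 * re κ dθ` is `π⁻¹` times the differential of `arg (ν * (ζ - σ θ))`, where `ζ` is the pole and
`ν` a conormal at `ζ`; as `σ` stays in the half-plane `re (ν * (ζ - w)) ≥ 0`, this argument varies
by at most `π`. -/
theorem integral_re_cauchyKernel_le {φ α β : ℝ} (hα : φ < α) (hαβ : α ≤ β) (hβ : β < φ + 2 * π) :
    IntervalIntegrable (fun θ ↦ (cauchyKernel Ω (boundaryCurve Ω φ) θ).re) volume α β ∧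
      ∫ θ in α..β, (cauchyKernel Ω (boundaryCurve Ω φ) θ).re ≤ 1 / 2 := by
  obtain ⟨K, hK⟩ := hΩ.exists_lipschitzWith_boundaryCurve
  obtain ⟨ν, hν⟩ := hΩ.exists_isConormal (hΩ.boundaryCurve_mem_frontier φ)
  set ζ := boundaryCurve Ω φ
  let G (w : ℂ) : ℂ := log (ν * (ζ - w))
  have hne {θ : ℝ} (hθ : θ ∈ uIcc α β) : boundaryCurve Ω θ ≠ ζ := by
    rw [uIcc_of_le hαβ] at hθ
    exact hΩ.boundaryCurve_ne ⟨hα.trans_le hθ.1, hθ.2.trans_lt hβ⟩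
  have hslit {θ : ℝ} (hθ : θ ∈ uIcc α β) : ν * (ζ - boundaryCurve Ω θ) ∈ slitPlane :=
    hν.mul_sub_mem_slitPlane (hΩ.boundaryCurve_mem_frontier θ).1 (hne hθ)
  have hC1 : ∀ θ ∈ uIcc α β, ContDiffAt ℂ 1 G (boundaryCurve Ω θ) := fun θ hθ ↦
    (contDiffAt_log (hslit hθ)).comp (f := fun w ↦ ν * (ζ - w)) _ (by fun_prop)
  have hkernel {θ : ℝ} (hθ : θ ∈ uIcc α β) : cauchyKernel Ω ζ θ =
      (2 * π * I)⁻¹ * (deriv (boundaryCurve Ω) θ • deriv G (boundaryCurve Ω θ)) :=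
    cauchyKernel_eq_deriv_smul_deriv_log (hslit hθ)
  have hInt : IntervalIntegrable (cauchyKernel Ω ζ) volume α β :=
    ((intervalIntegrable_deriv_smul_deriv_comp hK hC1).const_mul _).congr
      fun θ hθ ↦ (hkernel (uIoc_subset_uIcc hθ)).symm
  have harg (θ : ℝ) : |arg (ν * (ζ - boundaryCurve Ω θ))| ≤ π / 2 :=
    abs_arg_le_pi_div_two_iff.2 (hν.re_mul_sub_nonneg (hΩ.boundaryCurve_mem_frontier θ).1)
  refine ⟨⟨hInt.1.re, hInt.2.re⟩, ?_⟩
  calc ∫ θ in α..β, (cauchyKernel Ω ζ θ).re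
      = (∫ θ in α..β, cauchyKernel Ω ζ θ).re := reCLM.intervalIntegral_comp_comm hInt
    _ = ((2 * π * I)⁻¹ * (G (boundaryCurve Ω β) - G (boundaryCurve Ω α))).re := by
      rw [intervalIntegral.integral_congr fun θ hθ ↦ hkernel hθ,
        intervalIntegral.integral_const_mul, integral_deriv_smul_deriv_comp hK hC1]
    _ = (2 * π)⁻¹ * (arg (ν * (ζ - boundaryCurve Ω β)) - arg (ν * (ζ - boundaryCurve Ω α))) := by
      have hcoeff : (2 * π * I : ℂ)⁻¹ = ((2 * π)⁻¹ : ℝ) * -I := by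
        rw [_root_.mul_inv, inv_I]; push_cast; rfl
      rw [hcoeff, mul_assoc, re_ofReal_mul]
      simp [G, log_im]
    _ ≤ (2 * π)⁻¹ * π := by
      gcongr
      linarith [(abs_le.1 (harg β)).2, (abs_le.1 (harg α)).1]
    _ = 1 / 2 := by field_simp

theorem intervalIntegrable_re_cauchyKernel_boundaryCurve (φ : ℝ) :
    IntervalIntegrable (fun θ ↦ (cauchyKernel Ω (boundaryCurve Ω φ) θ).re) volume 0 (2 * π) ∧
      ∫ θ in (0)..2 * π, (cauchyKernel Ω (boundaryCurve Ω φ) θ).re ≤ 1 / 2 := by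
  have hperiodic : Function.Periodic (fun θ ↦ (cauchyKernel Ω (boundaryCurve Ω φ) θ).re) (2 * π) :=
    (cauchyKernel_periodic Ω _).comp re
  obtain ⟨hInt, hle⟩ := integral_le_of_forall_integral_le (lt_add_of_pos_right φ Real.two_pi_pos)
    (hΩ.ae_re_cauchyKernel_nonneg (hΩ.boundaryCurve_mem_frontier φ).1)
    (fun α β hα hαβ hβ ↦ (hΩ.integral_re_cauchyKernel_le hα hαβ hβ).1)
    (fun α β hα hαβ hβ ↦ (hΩ.integral_re_cauchyKernel_le hα hαβ hβ).2)
  refine ⟨hperiodic.intervalIntegrable Real.two_pi_pos.ne' hInt _ _, ?_⟩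
  rwa [← zero_add (2 * π), hperiodic.intervalIntegral_add_eq 0 φ]

end IsConvexDomain

end BoundaryEstimate

section ConjCauchyIntegral

namespace IsConvexDomain

variable {Ω : Set ℂ} (hΩ : IsConvexDomain Ω)

include hΩ

theorem integral_deriv_mul_eval_eq_zero (p : ℂ[X]) :
    ∫ θ in (0)..2 * π, deriv (boundaryCurve Ω) θ * p.eval (boundaryCurve Ω θ) = 0 := by
  have hcauchy := hΩ.cauchyIntegral_eval (spectrum_subset_of_mem hΩ.zero_mem) (p * X)
  have hker (θ : ℝ) : (p * X).eval (boundaryCurve Ω θ) • cauchyKernel Ω (0 : ℂ) θ =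
      (2 * π * I)⁻¹ * (deriv (boundaryCurve Ω) θ * p.eval (boundaryCurve Ω θ)) := by
    rw [cauchyKernel_apply, eval_mul_X, sub_zero, smul_eq_mul]
    field [hΩ.boundaryCurve_ne_zero θ]
  simp only [cauchyIntegral, hker] at hcauchy
  simpa using hcauchy

theorem integral_eval_sub_smul_cauchyKernel (p : ℂ[X]) (z : ℂ) : ∫ θ in (0)..2 * π,
    (p.eval (boundaryCurve Ω θ) - p.eval z) • cauchyKernel Ω z θ = 0 := by
  obtain ⟨q, hq⟩ := X_sub_C_dvd_sub_C_eval (a := z) (p := p)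
  have hker : ∀ᵐ θ, θ ∈ uIoc 0 (2 * π) →
      (p.eval (boundaryCurve Ω θ) - p.eval z) • cauchyKernel Ω z θ =
        (2 * π * I)⁻¹ * (deriv (boundaryCurve Ω) θ * q.eval (boundaryCurve Ω θ)) := by
    filter_upwards [hΩ.ae_boundaryCurve_ne z] with θ hne hθ
    have heval := congrArg (eval (boundaryCurve Ω θ)) hq
    simp only [eval_sub, eval_mul, eval_X, eval_C] at heval
    rw [heval, cauchyKernel_apply, smul_eq_mul]
    field [sub_ne_zero.2 (hne hθ)]
  rw [intervalIntegral.integral_congr_ae hker, intervalIntegral.integral_const_mul,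
    hΩ.integral_deriv_mul_eval_eq_zero, mul_zero]

theorem exists_lipschitzOnWith_conj_eval (p : ℂ[X]) :
    ∃ L, LipschitzOnWith L (fun z ↦ conj (p.eval z)) (closure Ω) := by
  have hp : ContDiff ℝ 1 fun z ↦ p.eval z := by
    simpa using (p.contDiff_aeval (𝕜 := ℂ) 1).restrict_scalars ℝ
  obtain ⟨L, hL⟩ := hp.contDiffOn.exists_lipschitzOnWith one_ne_zero hΩ.convex.closure
    hΩ.isCompact_closure
  exact ⟨L, fun z hz w hw ↦ by simpa [edist_eq_enorm_sub, ← map_sub] using hL hz hw⟩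

/- As `(p - p ζ) κ` integrates to zero, so does its conjugate: `κ` may be replaced by the real
density `κ + conj κ`. -/
theorem regularizedCauchyIntegral_conj_eval (p : ℂ[X]) (φ : ℝ) :
    regularizedCauchyIntegral Ω (fun z ↦ conj (p.eval z)) (boundaryCurve Ω φ) =
      (1 - ∫ θ in (0)..2 * π, 2 * (cauchyKernel Ω (boundaryCurve Ω φ) θ).re) •
          conj (p.eval (boundaryCurve Ω φ)) +
        ∫ θ in (0)..2 * π, (2 * (cauchyKernel Ω (boundaryCurve Ω φ) θ).re) •
          conj (p.eval (boundaryCurve Ω θ)) := by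
  obtain ⟨L, hL⟩ := hΩ.exists_lipschitzOnWith_conj_eval p
  set ζ := boundaryCurve Ω φ
  set κ : ℝ → ℂ := cauchyKernel Ω ζ
  let f (z : ℂ) : ℂ := conj (p.eval z)
  have hInt : IntervalIntegrable (fun θ ↦ (f (boundaryCurve Ω θ) - f ζ) • κ θ) volume 0 (2 * π) :=
    hΩ.intervalIntegrable_sub_smul_cauchyKernel hL (hΩ.boundaryCurve_mem_frontier φ).1
  have hre : IntervalIntegrable (fun θ ↦ 2 * (κ θ).re) volume 0 (2 * π) :=
    (hΩ.intervalIntegrable_re_cauchyKernel_boundaryCurve φ).1.const_mul 2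
  have hf : Continuous fun θ ↦ f (boundaryCurve Ω θ) :=
    continuous_conj.comp (p.continuous.comp hΩ.continuous_boundaryCurve)
  have hsplit (θ : ℝ) : conj ((p.eval (boundaryCurve Ω θ) - p.eval ζ) • κ θ) =
      (2 * (κ θ).re) • f (boundaryCurve Ω θ) - (2 * (κ θ).re) • f ζ -
        (f (boundaryCurve Ω θ) - f ζ) • κ θ := by
    rw [real_smul, real_smul, ← add_conj, smul_eq_mul, smul_eq_mul, map_mul, map_sub]
    ring
  have hzero : ∫ θ in (0)..2 * π, conj ((p.eval (boundaryCurve Ω θ) - p.eval ζ) • κ θ) = 0 := by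
    rw [intervalIntegral.intervalIntegral_conj, hΩ.integral_eval_sub_smul_cauchyKernel, map_zero]
  simp only [hsplit] at hzero
  rw [intervalIntegral.integral_sub ((hre.smul_continuousOn hf.continuousOn).sub
    (hre.smul_continuousOn continuousOn_const)) hInt, intervalIntegral.integral_sub
    (hre.smul_continuousOn hf.continuousOn) (hre.smul_continuousOn continuousOn_const),
    intervalIntegral.integral_smul_const, sub_eq_zero] at hzero
  rw [regularizedCauchyIntegral, ← hzero, sub_smul, one_smul]
  ring

theorem norm_regularizedCauchyIntegral_conj_eval_le {p : ℂ[X]}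
    (hp : ∀ z ∈ closure Ω, ‖p.eval z‖ ≤ 1) (φ : ℝ) :
    ‖regularizedCauchyIntegral Ω (fun z ↦ conj (p.eval z)) (boundaryCurve Ω φ)‖ ≤ 1 := by
  rw [hΩ.regularizedCauchyIntegral_conj_eval]
  obtain ⟨hInt, hle⟩ := hΩ.intervalIntegrable_re_cauchyKernel_boundaryCurve φ
  have hmem (θ : ℝ) := (hΩ.boundaryCurve_mem_frontier θ).1
  set ρ : ℝ → ℝ := fun θ ↦ 2 * (cauchyKernel Ω (boundaryCurve Ω φ) θ).re
  have hρ : ∫ θ in (0)..2 * π, ρ θ ≤ 1 := by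
    rw [intervalIntegral.integral_const_mul]
    linarith
  have hρ0 : ∀ᵐ θ, 0 ≤ ρ θ :=
    (hΩ.ae_re_cauchyKernel_nonneg (hmem φ)).mono fun θ hθ ↦ mul_nonneg zero_le_two hθ
  calc ‖_‖ ≤ (1 - ∫ θ in (0)..2 * π, ρ θ) * 1 + ∫ θ in (0)..2 * π, ρ θ := by
        refine norm_add_le_of_le ?_ ?_
        · rw [norm_smul, Real.norm_of_nonneg (sub_nonneg.2 hρ), RCLike.norm_conj]
          exact mul_le_mul_of_nonneg_left (hp _ (hmem φ)) (sub_nonneg.2 hρ)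
        · refine intervalIntegral.norm_integral_le_of_norm_le Real.two_pi_pos.le ?_
            (hInt.const_mul 2)
          filter_upwards [hρ0] with θ hθ _
          rw [norm_smul, RCLike.norm_conj, Real.norm_of_nonneg hθ]
          exact mul_le_of_le_one_right hθ (hp _ (hmem θ))
    _ = 1 := by ring

theorem norm_cauchyIntegral_conj_eval_le {p : ℂ[X]} (hp : ∀ z ∈ closure Ω, ‖p.eval z‖ ≤ 1)
    {z : ℂ} (hz : z ∈ Ω) : ‖cauchyIntegral Ω (fun w ↦ conj (p.eval w)) z‖ ≤ 1 := by
  obtain ⟨L, hL⟩ := hΩ.exists_lipschitzOnWith_conj_eval p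
  have hf : Continuous fun w ↦ conj (p.eval w) := continuous_conj.comp p.continuous
  have hdiff : DiffContOnCl ℂ (regularizedCauchyIntegral Ω fun w ↦ conj (p.eval w)) Ω :=
    ⟨(hΩ.differentiableOn_cauchyIntegral hf).congr fun w ↦ hΩ.regularizedCauchyIntegral_eq hf,
      hΩ.continuousOn_regularizedCauchyIntegral hL⟩
  rw [← hΩ.regularizedCauchyIntegral_eq hf hz]
  refine norm_le_of_forall_mem_frontier_norm_le hΩ.isBounded hdiff (fun w hw ↦ ?_)
    (subset_closure hz)
  obtain ⟨φ, rfl⟩ := hΩ.exists_boundaryCurve_eq hw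
  exact hΩ.norm_regularizedCauchyIntegral_conj_eval_le hp φ

end IsConvexDomain

end ConjCauchyIntegral

section NumericalRange

variable {E : Type*} [NormedAddCommGroup E] [InnerProductSpace ℂ E]

/-- The numerical range (field of values) of an operator: the set of its Rayleigh quotients. -/
def numericalRange (T : E →L[ℂ] E) : Set ℂ := {c | ∃ x ≠ 0, c = ⟪x, T x⟫_ℂ / ⟪x, x⟫_ℂ}

theorem mem_numericalRange {T : E →L[ℂ] E} {c : ℂ} :
    c ∈ numericalRange T ↔ ∃ x ≠ 0, ⟪x, T x⟫_ℂ = c * ⟪x, x⟫_ℂ :=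
  exists_congr fun _ ↦ and_congr_right fun hx ↦ by
    rw [eq_div_iff (inner_self_ne_zero.2 hx), eq_comm]

theorem numericalRange_nonempty [Nontrivial E] (T : E →L[ℂ] E) : (numericalRange T).Nonempty :=
  let ⟨x, hx⟩ := exists_ne (0 : E)
  ⟨_, x, hx, rfl⟩

theorem exists_mem_numericalRange_inner_eq [Nontrivial E] (T : E →L[ℂ] E) (x : E) :
    ∃ c ∈ numericalRange T, ⟪x, T x⟫_ℂ = c * ⟪x, x⟫_ℂ := by
  obtain rfl | hx := eq_or_ne x 0
  · obtain ⟨c, hc⟩ := numericalRange_nonempty T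
    exact ⟨c, hc, by simp⟩
  · exact ⟨_, ⟨x, hx, rfl⟩, (div_mul_cancel₀ _ (inner_self_ne_zero.2 hx)).symm⟩

theorem norm_le_of_mem_numericalRange {T : E →L[ℂ] E} {c : ℂ} (hc : c ∈ numericalRange T) :
    ‖c‖ ≤ ‖T‖ := by
  obtain ⟨x, hx, rfl⟩ := hc
  rw [norm_div, inner_self_eq_norm_sq_to_K, norm_pow, RCLike.norm_ofReal, abs_norm]
  refine div_le_of_le_mul₀ (by positivity) (norm_nonneg T) ((norm_inner_le_norm _ _).trans ?_)
  rw [sq, mul_left_comm]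
  gcongr
  exact T.le_opNorm x

theorem isBounded_numericalRange (T : E →L[ℂ] E) : Bornology.IsBounded (numericalRange T) :=
  isBounded_iff_forall_norm_le.2 ⟨‖T‖, fun _ ↦ norm_le_of_mem_numericalRange⟩

theorem numericalRange_algebraMap_add_smul (a b : ℂ) (T : E →L[ℂ] E) :
    numericalRange (algebraMap ℂ (E →L[ℂ] E) a + b • T) = (a + b * ·) '' numericalRange T := by
  have hquot {x : E} (hx : x ≠ 0) :
      ⟪x, (algebraMap ℂ (E →L[ℂ] E) a + b • T) x⟫_ℂ / ⟪x, x⟫_ℂ =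
        a + b * (⟪x, T x⟫_ℂ / ⟪x, x⟫_ℂ) := by
    simp only [Algebra.algebraMap_eq_smul_one, _root_.add_apply, _root_.smul_apply,
      one_apply_eq_self, inner_add_right, inner_smul_right]
    field [inner_self_ne_zero.2 hx]
  ext c
  constructor
  · rintro ⟨x, hx, rfl⟩
    exact ⟨_, ⟨x, hx, rfl⟩, (hquot hx).symm⟩
  · rintro ⟨_, ⟨x, hx, rfl⟩, rfl⟩
    exact ⟨x, hx, (hquot hx).symm⟩

theorem exists_ne_zero_im_conj_mul_add_mul_eq_zero (α β : ℂ) :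
    ∃ u : ℂ, u ≠ 0 ∧ (conj u * α + u * β).im = 0 := by
  have hsub (u : ℂ) : (conj u * α + u * β).im = (u * (β - conj α)).im := by
    simp only [add_im, mul_im, conj_re, conj_im, sub_re, sub_im]
    ring
  simp only [hsub]
  obtain h | h := eq_or_ne (β - conj α) 0
  · exact ⟨1, one_ne_zero, by simp [h]⟩
  · exact ⟨conj (β - conj α), (_root_.map_ne_zero _).2 h, by rw [mul_comm, mul_conj, ofReal_im]⟩

/- The Rayleigh quotient along the segment from `x` to `y` is real, so the intermediate value
theorem applies. -/
theorem ofReal_mem_numericalRange_of_im_eq_zero {T : E →L[ℂ] E} {x y : E} (hx : x ≠ 0) (hy : y ≠ 0)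
    (hTx : ⟪x, T x⟫_ℂ = 0) (hTy : ⟪y, T y⟫_ℂ = ⟪y, y⟫_ℂ)
    (him : (⟪x, T y⟫_ℂ + ⟪y, T x⟫_ℂ).im = 0) {t : ℝ} (ht : t ∈ Icc (0 : ℝ) 1) :
    (t : ℂ) ∈ numericalRange T := by
  let z (s : ℝ) : E := (1 - s : ℂ) • x + (s : ℂ) • y
  have hcross : ⟪x, T y⟫_ℂ + ⟪y, T x⟫_ℂ = (⟪x, T y⟫_ℂ + ⟪y, T x⟫_ℂ).re :=
    (conj_eq_iff_re.1 (conj_eq_iff_im.2 him)).symm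
  have hTz (s : ℝ) : ⟪z s, T (z s)⟫_ℂ =
      ((1 - s) * s * (⟪x, T y⟫_ℂ + ⟪y, T x⟫_ℂ).re + s ^ 2 * ‖y‖ ^ 2 : ℝ) := by
    push_cast
    rw [← hcross]
    simp only [z, map_add, map_smul, inner_add_left, inner_add_right, inner_smul_left,
      inner_smul_right, map_sub, map_one, conj_ofReal, hTx, hTy, inner_self_eq_norm_sq_to_K,
      coe_algebraMap]
    ring
  have hz (s : ℝ) : z s ≠ 0 := fun hzs ↦ by
    have hyx : (s : ℂ) • y = -((1 - s : ℂ) • x) := eq_neg_of_add_eq_zero_right hzs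
    have hs : s = 0 := by
      simpa [inner_smul_left, inner_smul_right, hTx, hTy, hy] using
        congrArg (fun v ↦ ⟪v, T v⟫_ℂ) hyx
    simp [hs, hx] at hyx
  let ρ (s : ℝ) : ℝ := ((1 - s) * s * (⟪x, T y⟫_ℂ + ⟪y, T x⟫_ℂ).re + s ^ 2 * ‖y‖ ^ 2) / ‖z s‖ ^ 2
  have hρ : Continuous ρ := by
    have hzc : Continuous z := by fun_prop
    exact Continuous.div (by fun_prop) (by fun_prop)
      fun s ↦ pow_ne_zero 2 (norm_ne_zero_iff.2 (hz s))
  obtain ⟨s, -, rfl⟩ := intermediate_value_Icc zero_le_one hρ.continuousOn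
    (show t ∈ Icc (ρ 0) (ρ 1) by simpa [ρ, z, hy] using ht)
  exact ⟨z s, hz s, by rw [hTz, inner_self_eq_norm_sq_to_K]; simp [ρ]⟩

theorem ofReal_mem_numericalRange {T : E →L[ℂ] E} (h0 : 0 ∈ numericalRange T)
    (h1 : 1 ∈ numericalRange T) {t : ℝ} (ht : t ∈ Icc (0 : ℝ) 1) : (t : ℂ) ∈ numericalRange T := by
  obtain ⟨x, hx, hTx⟩ := mem_numericalRange.1 h0
  obtain ⟨y, hy, hTy⟩ := mem_numericalRange.1 h1
  rw [zero_mul] at hTx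
  rw [one_mul] at hTy
  obtain ⟨u, hu, him⟩ := exists_ne_zero_im_conj_mul_add_mul_eq_zero ⟪x, T y⟫_ℂ ⟪y, T x⟫_ℂ
  refine ofReal_mem_numericalRange_of_im_eq_zero (smul_ne_zero hu hx) hy ?_ hTy ?_ ht
  · simp [hTx]
  · simpa only [map_smul, inner_smul_left, inner_smul_right] using him

theorem convex_numericalRange (T : E →L[ℂ] E) : Convex ℝ (numericalRange T) := by
  rw [convex_iff_segment_subset]
  intro a ha b hb
  rw [segment_eq_image']
  rintro _ ⟨t, ht, rfl⟩
  obtain rfl | hab := eq_or_ne a b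
  · simpa using ha
  have hba := sub_ne_zero.2 hab.symm
  let S : E →L[ℂ] E := algebraMap ℂ (E →L[ℂ] E) (-a / (b - a)) + (b - a)⁻¹ • T
  have hS : numericalRange S = (-a / (b - a) + (b - a)⁻¹ * ·) '' numericalRange T :=
    numericalRange_algebraMap_add_smul _ _ T
  have ht' : (t : ℂ) ∈ numericalRange S := by
    refine ofReal_mem_numericalRange ?_ ?_ ht <;> rw [hS]
    · exact ⟨a, ha, by field⟩
    · exact ⟨b, hb, by field⟩
  rw [hS] at ht'
  obtain ⟨c, hc, hct⟩ := ht'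
  convert hc using 1
  simp only [← hct, real_smul]
  field

theorem spectrum_subset_closure_numericalRange [CompleteSpace E] (T : E →L[ℂ] E) :
    spectrum ℂ T ⊆ closure (numericalRange T) := by
  intro z hz
  by_contra hcl
  cases subsingleton_or_nontrivial E
  · simp at hz
  obtain ⟨δ, hδ, hdist⟩ : ∃ δ > 0, ∀ c ∈ numericalRange T, δ ≤ dist z c := by
    simpa [Metric.mem_closure_iff] using hcl
  refine hz (ContinuousLinearMap.isUnit_of_forall_le_norm_inner_map (c := ⟨δ, hδ.le⟩) _ hδ
    fun x ↦ ?_)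
  obtain ⟨c, hc, hinner⟩ := exists_mem_numericalRange_inner_eq T x
  have hsub : ⟪x, (algebraMap ℂ (E →L[ℂ] E) z - T) x⟫_ℂ = (z - c) * ⟪x, x⟫_ℂ := by
    simp [Algebra.algebraMap_eq_smul_one, hinner, sub_mul]
  rw [norm_inner_symm, hsub, norm_mul, inner_self_eq_norm_sq_to_K, norm_pow,
    RCLike.norm_ofReal, abs_norm, mul_comm, ← dist_eq_norm]
  gcongr
  exact hdist c hc

end NumericalRange

section OperatorEstimate

variable {E : Type*} [NormedAddCommGroup E] [InnerProductSpace ℂ E]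

theorem intervalIntegrable_re_inner_apply {F : ℝ → E →L[ℂ] E} {α β : ℝ}
    (hF : IntervalIntegrable F volume α β) (x y : E) :
    IntervalIntegrable (fun θ ↦ (⟪x, F θ y⟫_ℂ).re) volume α β :=
  let L := reCLM ∘L (innerSL ℂ x ∘L ContinuousLinearMap.apply ℂ E y).restrictScalars ℝ
  ⟨L.integrable_comp hF.1, L.integrable_comp hF.2⟩

theorem re_inner_intervalIntegral_apply [CompleteSpace E] {F : ℝ → E →L[ℂ] E} {α β : ℝ}
    (hF : IntervalIntegrable F volume α β) (x y : E) :
    (⟪x, (∫ θ in α..β, F θ) y⟫_ℂ).re = ∫ θ in α..β, (⟪x, F θ y⟫_ℂ).re :=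
  ((reCLM ∘L (innerSL ℂ x ∘L ContinuousLinearMap.apply ℂ E y).restrictScalars ℝ)
    |>.intervalIntegral_comp_comm hF).symm

/- Expand `0 ≤ (⟪v, N v⟫).re` at `v = conj c • x - y`. -/
theorem re_inner_smul_add_le {N : E →L[ℂ] E} (hN : ∀ v, 0 ≤ (⟪v, N v⟫_ℂ).re) {c : ℂ} (hc : ‖c‖ ≤ 1)
    (x y : E) :
    (⟪x, (c • N) y⟫_ℂ).re + (⟪y, (conj c • N) x⟫_ℂ).re ≤ (⟪x, N x⟫_ℂ).re + (⟪y, N y⟫_ℂ).re := by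
  have hv := hN (conj c • x - y)
  have hexp : ⟪conj c • x - y, N (conj c • x - y)⟫_ℂ = (‖c‖ ^ 2 : ℝ) * ⟪x, N x⟫_ℂ +
      ⟪y, N y⟫_ℂ - (⟪x, (c • N) y⟫_ℂ + ⟪y, (conj c • N) x⟫_ℂ) := by
    have hcc : (‖c‖ ^ 2 : ℝ) = c * conj c := by rw [mul_conj, normSq_eq_norm_sq]
    simp only [hcc, map_sub, map_smul, inner_sub_left, inner_sub_right, inner_smul_left,
      inner_smul_right, conj_conj, _root_.smul_apply]
    ring
  rw [hexp, sub_re, add_re, add_re, re_ofReal_mul] at hv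
  nlinarith [hN x, pow_le_one₀ (n := 2) (norm_nonneg c) hc]

variable {Ω : Set ℂ} {T : E →L[ℂ] E}

theorem IsConormal.re_inner_resolvent_nonneg {ζ ν : ℂ} (hν : IsConormal Ω ζ ν)
    (hT : numericalRange T ⊆ closure Ω) (hζ : ζ ∈ resolventSet ℂ T) (x : E) :
    0 ≤ (⟪x, (ν⁻¹ • resolvent T ζ) x⟫_ℂ).re := by
  set y := resolvent T ζ x with hy
  have hx : x = ζ • y - T y := by
    have hres := congrArg (· x) (smul_resolvent hζ)
    exact eq_sub_of_add_eq (by simpa [← hy] using hres.symm)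
  rw [_root_.smul_apply, ← hy, hx]
  cases subsingleton_or_nontrivial E
  · simp [Subsingleton.elim y 0]
  obtain ⟨w, hw, hinner⟩ := exists_mem_numericalRange_inner_eq T y
  have hquad : ⟪ζ • y - T y, ν⁻¹ • y⟫_ℂ =
      (‖y‖ ^ 2 / normSq ν : ℝ) * conj (ν * (ζ - w)) := by
    rw [← inner_conj_symm, inner_smul_left, inner_sub_right, inner_smul_right, hinner,
      inner_self_eq_norm_sq_to_K, Complex.inv_def]
    simp only [ofReal_inv, map_mul, RingHomCompTriple.comp_apply, RingHom.id_apply, map_inv₀,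
      conj_ofReal, coe_algebraMap, map_sub, map_pow, ofReal_div, ofReal_pow]
    ring
  rw [hquad, re_ofReal_mul, conj_re]
  exact mul_nonneg (div_nonneg (sq_nonneg _) (normSq_nonneg _))
    (hν.re_mul_sub_nonneg (hT hw))

namespace IsConvexDomain

variable [CompleteSpace E] (hΩ : IsConvexDomain Ω) (hT : numericalRange T ⊆ closure Ω)
  (hs : spectrum ℂ T ⊆ Ω)

include hΩ hT hs

theorem ae_re_inner_cauchyKernel_nonneg :
    ∀ᵐ θ, ∀ x, 0 ≤ (⟪x, cauchyKernel Ω T θ x⟫_ℂ).re := by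
  filter_upwards [hΩ.ae_exists_deriv_boundaryCurve_eq] with θ ⟨ν, hν, c, hc, hderiv⟩ x
  have hker : cauchyKernel Ω T θ =
      ((c / (2 * π) : ℝ) : ℂ) • ν⁻¹ • resolvent T (boundaryCurve Ω θ) := by
    rw [cauchyKernel, hderiv, smul_smul]
    congr 1
    push_cast
    field [I_ne_zero]
  rw [hker, _root_.smul_apply, inner_smul_right, re_ofReal_mul]
  exact mul_nonneg (by positivity)
    (hν.re_inner_resolvent_nonneg hT (hΩ.boundaryCurve_mem_resolventSet hs θ) x)

theorem re_inner_add_cauchyIntegral_le {f : ℂ → ℂ} (hf : Continuous f)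
    (hf1 : ∀ z ∈ closure Ω, ‖f z‖ ≤ 1) (x y : E) :
    (⟪x, cauchyIntegral Ω f T y⟫_ℂ).re + (⟪y, cauchyIntegral Ω (fun z ↦ conj (f z)) T x⟫_ℂ).re ≤
      ‖x‖ ^ 2 + ‖y‖ ^ 2 := by
  have hInt := hΩ.intervalIntegrable_cauchyKernel hs 0 (2 * π)
  have hIntf := hΩ.intervalIntegrable_smul_cauchyKernel hs hf 0 (2 * π)
  have hIntf' := hΩ.intervalIntegrable_smul_cauchyKernel hs (f := fun z ↦ conj (f z))
    (by fun_prop) 0 (2 * π)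
  have hnorm (v : E) : ∫ θ in (0)..2 * π, (⟪v, cauchyKernel Ω T θ v⟫_ℂ).re = ‖v‖ ^ 2 := by
    rw [← re_inner_intervalIntegral_apply hInt, hΩ.integral_cauchyKernel hs, one_apply_eq_self]
    exact inner_self_eq_norm_sq (𝕜 := ℂ) v
  rw [cauchyIntegral, cauchyIntegral, re_inner_intervalIntegral_apply hIntf,
    re_inner_intervalIntegral_apply hIntf', ← hnorm x, ← hnorm y,
    ← intervalIntegral.integral_add (intervalIntegrable_re_inner_apply hIntf x y)
      (intervalIntegrable_re_inner_apply hIntf' y x),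
    ← intervalIntegral.integral_add (intervalIntegrable_re_inner_apply hInt x x)
      (intervalIntegrable_re_inner_apply hInt y y)]
  refine intervalIntegral.integral_mono_ae Real.two_pi_pos.le
    ((intervalIntegrable_re_inner_apply hIntf x y).add
      (intervalIntegrable_re_inner_apply hIntf' y x))
    ((intervalIntegrable_re_inner_apply hInt x x).add
      (intervalIntegrable_re_inner_apply hInt y y)) ?_
  filter_upwards [hΩ.ae_re_inner_cauchyKernel_nonneg hT hs] with θ hθ
  exact re_inner_smul_add_le hθ (hf1 _ (hΩ.boundaryCurve_mem_frontier θ).1) x y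

theorem norm_aeval_add_star_cauchyIntegral_le {p : ℂ[X]} (hp : ∀ z ∈ closure Ω, ‖p.eval z‖ ≤ 1) :
    ‖aeval T p + star (cauchyIntegral Ω (fun z ↦ conj (p.eval z)) T)‖ ≤ 2 := by
  refine ContinuousLinearMap.opNorm_le_of_re_inner_le zero_le_two fun x y hx hy ↦ ?_
  have hle := hΩ.re_inner_add_cauchyIntegral_le hT hs p.continuous hp y x
  rw [hΩ.cauchyIntegral_eval hs, hx, hy] at hle
  rw [_root_.add_apply, inner_add_left, map_add, inner_re_symm, ContinuousLinearMap.star_eq_adjoint,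
    ContinuousLinearMap.adjoint_inner_left]
  exact hle.trans_eq (by norm_num)

end IsConvexDomain

end OperatorEstimate

section ClosedSubalgebraIntegral

namespace IsConvexDomain

variable {A : Type*} [NormedRing A] [NormedAlgebra ℂ A] [CompleteSpace A] {Ω : Set ℂ}
  (hΩ : IsConvexDomain Ω) {a : A} (ha : spectrum ℂ a ⊆ Ω)

include hΩ ha

theorem cauchyKernel_mem_of_isClosed {S : Subalgebra ℂ A} (hS : IsClosed (S : Set A))
    (haS : a ∈ S) (θ : ℝ) : cauchyKernel Ω a θ ∈ S := by
  refine S.smul_mem (resolvent_mem_of_isClosed hS haS (hΩ.boundaryCurve_ne_zero θ)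
    fun u hu ↦ spectrum.notMem_iff.1 fun hz ↦ hΩ.boundaryCurve_notMem θ ?_) _
  have hu0 : u ≠ 0 := (zero_lt_one.trans_le hu).ne'
  simpa [smul_smul, hu0] using hΩ.convex.smul_mem_of_zero_mem hΩ.zero_mem (ha hz)
    ⟨inv_nonneg.2 (zero_le_one.trans hu), inv_le_one_of_one_le₀ hu⟩

theorem cauchyIntegral_mem_of_isClosed {S : Subalgebra ℂ A} (hS : IsClosed (S : Set A))
    (haS : a ∈ S) {f : ℂ → ℂ} (hf : Continuous f) : cauchyIntegral Ω f a ∈ S := by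
  have hInt := hΩ.intervalIntegrable_smul_cauchyKernel ha hf 0 (2 * π)
  have havg : ⨍ θ in (0)..2 * π, f (boundaryCurve Ω θ) • cauchyKernel Ω a θ ∈ S :=
    (S.toSubmodule.restrictScalars ℝ).convex.set_average_mem hS (by simp)
      (by simp [ENNReal.mul_eq_top])
      (.of_forall fun θ ↦ S.smul_mem (hΩ.cauchyKernel_mem_of_isClosed ha hS haS θ) _) hInt.def'
  rw [interval_average_eq, sub_zero] at havg
  rw [cauchyIntegral, ← smul_inv_smul₀ Real.two_pi_pos.ne' (∫ _ in _.._, _)]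
  exact (S.toSubmodule.restrictScalars ℝ).smul_mem _ havg

theorem exists_norm_cauchyIntegral_le : ∃ C, ∀ (f : ℂ → ℂ) (m : ℝ),
    (∀ z ∈ closure Ω, ‖f z‖ ≤ m) → ‖cauchyIntegral Ω f a‖ ≤ C * m := by
  refine ⟨∫ θ in (0)..2 * π, ‖cauchyKernel Ω a θ‖, fun f m hm ↦ ?_⟩
  rw [← intervalIntegral.integral_mul_const]
  refine intervalIntegral.norm_integral_le_of_norm_le Real.two_pi_pos.le (.of_forall fun θ _ ↦ ?_)
    ((hΩ.intervalIntegrable_cauchyKernel ha 0 (2 * π)).norm.mul_const m)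
  rw [norm_smul, mul_comm]
  gcongr
  exact hm _ (hΩ.boundaryCurve_mem_frontier θ).1

end IsConvexDomain

end ClosedSubalgebraIntegral

section SpectralSet

variable {E : Type*} [NormedAddCommGroup E] [InnerProductSpace ℂ E] {Ω : Set ℂ} {T : E →L[ℂ] E}

/-- The pair of the coordinate function on `closure Ω` and the operator `T`. The algebra it
generates consists of the pairs `(p, p(T))`, so that a bound for the second component by the first
one on this algebra says that `closure Ω` is a spectral set for `T`. -/
noncomputable def coordPair (Ω : Set ℂ) (T : E →L[ℂ] E) : C(closure Ω, ℂ) × (E →L[ℂ] E) :=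
  ((ContinuousMap.id ℂ).restrict (closure Ω), T)

theorem aeval_coordPair (p : ℂ[X]) :
    aeval (coordPair Ω T) p = (p.toContinuousMap.restrict (closure Ω), aeval T p) := by
  refine Prod.ext (ContinuousMap.ext fun w ↦ ?_)
    (aeval_algHom_apply (AlgHom.snd ℂ C(closure Ω, ℂ) _) _ p).symm
  have heval := aeval_algHom_apply ((ContinuousMap.evalAlgHom ℂ ℂ w).comp
    (AlgHom.fst ℂ _ (E →L[ℂ] E))) (coordPair Ω T) p
  exact heval.symm.trans (congrFun (coe_aeval_eq_eval (w : ℂ)) p)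

theorem mem_adjoin_coordPair {x : C(closure Ω, ℂ) × (E →L[ℂ] E)} :
    x ∈ Algebra.adjoin ℂ {coordPair Ω T} ↔
      ∃ p : ℂ[X], (p.toContinuousMap.restrict (closure Ω), aeval T p) = x := by
  simp only [Algebra.adjoin_singleton_eq_range_aeval, AlgHom.mem_range, aeval_coordPair]

namespace IsConvexDomain

variable (hΩ : IsConvexDomain Ω)

include hΩ

theorem numericalRange_smul_subset (hT : numericalRange T ⊆ closure Ω) {t : ℝ}
    (ht : t ∈ Ico (0 : ℝ) 1) :
    numericalRange (t • T) ⊆ closure Ω := by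
  have hsmul := numericalRange_algebraMap_add_smul 0 t T
  simp only [map_zero, zero_add, Complex.coe_smul] at hsmul
  rw [hsmul]
  rintro _ ⟨w, hw, rfl⟩
  exact subset_closure (hΩ.smul_mem (hT hw) ht)

variable [CompleteSpace E]

theorem spectrum_smul_coordPair_subset (hs : spectrum ℂ T ⊆ Ω) {t : ℝ} (ht : t ∈ Ico (0 : ℝ) 1) :
    spectrum ℂ (t • coordPair Ω T) ⊆ Ω := by
  have hpair : t • coordPair Ω T =
      (t • (ContinuousMap.id ℂ).restrict (closure Ω), t • T) := rfl
  rw [hpair, Prod.spectrum_eq, union_subset_iff, ContinuousMap.spectrum_eq_range]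
  refine ⟨?_, hΩ.spectrum_smul_subset hs (Ico_subset_Icc_self ht)⟩
  rintro _ ⟨w, rfl⟩
  exact hΩ.smul_mem w.2 ht

variable [CompactSpace (closure Ω)]

theorem cauchyIntegral_smul_coordPair (hs : spectrum ℂ T ⊆ Ω) {t : ℝ} (ht : t ∈ Ico (0 : ℝ) 1)
    {f : ℂ → ℂ} (hf : Continuous f) :
    (∀ w, (cauchyIntegral Ω f (t • coordPair Ω T)).1 w = cauchyIntegral Ω f (t • (w : ℂ))) ∧
      (cauchyIntegral Ω f (t • coordPair Ω T)).2 = cauchyIntegral Ω f (t • T) := by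
  have hspec := hΩ.spectrum_smul_coordPair_subset hs ht
  refine ⟨fun w ↦ ?_, hΩ.map_cauchyIntegral (ContinuousAlgHom.snd ℂ C(closure Ω, ℂ) _) hspec hf⟩
  let φ : C(closure Ω, ℂ) →A[ℂ] ℂ :=
    ⟨ContinuousMap.evalAlgHom ℂ ℂ w, continuous_eval_const w⟩
  exact hΩ.map_cauchyIntegral (φ.comp (ContinuousAlgHom.fst ℂ _ _)) hspec hf

theorem exists_mem_norm_add_star_le (hT : numericalRange T ⊆ closure Ω) (hs : spectrum ℂ T ⊆ Ω)
    {p : ℂ[X]} (hp : ∀ z ∈ closure Ω, ‖p.eval z‖ ≤ 1) {c : ℝ} (hc : 2 < c) :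
    ∃ y ∈ (Algebra.adjoin ℂ {coordPair Ω T}).topologicalClosure,
      ‖y.1‖ ≤ 1 ∧ ‖aeval T p + star y.2‖ ≤ c := by
  have hlim : Tendsto (fun t : ℝ ↦ ‖aeval T p - aeval (t • T) p‖) (𝓝[<] 1) (𝓝 0) := by
    have hcont : Continuous fun t : ℝ ↦ ‖aeval T p - aeval (t • T) p‖ := by
      fun_prop
    simpa using (hcont.tendsto 1).mono_left nhdsWithin_le_nhds
  obtain ⟨t, hlt, ht⟩ := ((hlim.eventually_le_const (sub_pos.2 hc)).and
    (Ico_mem_nhdsLT zero_lt_one)).exists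
  have hconj : Continuous fun z ↦ conj (p.eval z) := by fun_prop
  have hspec := hΩ.spectrum_smul_coordPair_subset hs ht
  obtain ⟨hfst, hsnd⟩ := hΩ.cauchyIntegral_smul_coordPair hs ht hconj
  refine ⟨cauchyIntegral Ω (fun z ↦ conj (p.eval z)) (t • coordPair Ω T),
    hΩ.cauchyIntegral_mem_of_isClosed hspec (Subalgebra.isClosed_topologicalClosure _)
      (Subalgebra.smul_mem _ (Subalgebra.le_topologicalClosure _
        (Algebra.self_mem_adjoin_singleton ℂ _)) (t : ℂ)) hconj, ?_, ?_⟩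
  · refine (ContinuousMap.norm_le _ zero_le_one).2 fun w ↦ ?_
    rw [hfst]
    exact hΩ.norm_cauchyIntegral_conj_eval_le hp (hΩ.smul_mem w.2 ht)
  · have hle := hΩ.norm_aeval_add_star_cauchyIntegral_le (hΩ.numericalRange_smul_subset hT ht)
      (hΩ.spectrum_smul_subset hs (Ico_subset_Icc_self ht)) hp
    rw [hsnd]
    calc _ = ‖(aeval T p - aeval (t • T) p) + (aeval (t • T) p +
            star (cauchyIntegral Ω (fun z ↦ conj (p.eval z)) (t • T)))‖ := by
          rw [← add_assoc, sub_add_cancel]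
      _ ≤ (c - 2) + 2 := norm_add_le_of_le hlt hle
      _ = c := sub_add_cancel c 2

end IsConvexDomain

theorem IsConvexDomain.norm_aeval_le [CompleteSpace E] (hΩ : IsConvexDomain Ω)
    {T : E →L[ℂ] E} (hT : closure (numericalRange T) ⊆ Ω)
    {p : ℂ[X]} {m : ℝ} (hp : ∀ z ∈ closure Ω, ‖p.eval z‖ ≤ m) :
    ‖aeval T p‖ ≤ (1 + √2) * m := by
  have hs := (spectrum_subset_closure_numericalRange T).trans hT
  have : CompactSpace (closure Ω) := isCompact_iff_compactSpace.1 hΩ.isCompact_closure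
  obtain ⟨C, hC⟩ := hΩ.exists_norm_cauchyIntegral_le hs
  have hnorm (q : ℂ[X]) (z : ℂ) (hz : z ∈ closure Ω) :
      ‖q.eval z‖ ≤ ‖q.toContinuousMap.restrict (closure Ω)‖ :=
    (q.toContinuousMap.restrict (closure Ω)).norm_coe_le_norm ⟨z, hz⟩
  have hmem : (p.toContinuousMap.restrict (closure Ω), aeval T p) ∈
      Algebra.adjoin ℂ {coordPair Ω T} := mem_adjoin_coordPair.2 ⟨p, rfl⟩
  refine (norm_snd_le_one_add_sqrt_two (C := C) ?_ ?_ hmem).trans ?_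
  · intro x hx
    obtain ⟨q, rfl⟩ := mem_adjoin_coordPair.1 hx
    simpa [hΩ.cauchyIntegral_eval hs] using hC q.eval _ (hnorm q)
  · intro x hx hx1 c hc
    obtain ⟨q, rfl⟩ := mem_adjoin_coordPair.1 hx
    exact hΩ.exists_mem_norm_add_star_le ((subset_closure.trans hT).trans subset_closure) hs
      (fun z hz ↦ (hnorm q z hz).trans hx1) hc
  · gcongr
    exact (ContinuousMap.norm_le _ ((norm_nonneg _).trans (hp 0 (subset_closure hΩ.zero_mem)))).2
      fun w ↦ hp w w.2

end SpectralSet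

section CrouzeixPalencia

theorem isConvexDomain_thickening {S : Set ℂ} (hS : Convex ℝ S) (hb : Bornology.IsBounded S)
    (h0 : 0 ∈ S) {δ : ℝ} (hδ : 0 < δ) : IsConvexDomain (thickening δ S) where
  convex := hS.thickening δ
  isOpen := isOpen_thickening
  isBounded := hb.thickening
  zero_mem := self_subset_thickening hδ S h0

variable {E : Type*} [NormedAddCommGroup E] [InnerProductSpace ℂ E]

theorem bddAbove_norm_eval_image_numericalRange (T : E →L[ℂ] E) (p : ℂ[X]) :
    BddAbove ((fun z ↦ ‖p.eval z‖) '' numericalRange T) :=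
  ((isBounded_numericalRange T).isCompact_closure.bddAbove_image (by fun_prop)).mono
    (image_mono subset_closure)

variable [CompleteSpace E] {T : E →L[ℂ] E} {p : ℂ[X]} {m : ℝ}

theorem norm_aeval_le_of_zero_mem_numericalRange (h0 : 0 ∈ numericalRange T)
    (hp : ∀ z ∈ numericalRange T, ‖p.eval z‖ ≤ m) : ‖aeval T p‖ ≤ (1 + √2) * m := by
  suffices ∀ ε > 0, ‖aeval T p‖ ≤ (1 + √2) * (m + ε) by
    have hlim : Tendsto (fun ε ↦ (1 + √2) * (m + ε)) (𝓝[>] 0) (𝓝 ((1 + √2) * (m + 0))) :=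
      (Continuous.tendsto (by fun_prop) 0).mono_left nhdsWithin_le_nhds
    rw [add_zero] at hlim
    exact ge_of_tendsto hlim (eventually_mem_nhdsWithin.mono this)
  intro ε hε
  have hcl (z : ℂ) (hz : z ∈ closure (numericalRange T)) : ‖p.eval z‖ ≤ m :=
    le_on_closure hp (by fun_prop) (by fun_prop) hz
  have hopen : IsOpen {z | ‖p.eval z‖ < m + ε} := isOpen_lt (by fun_prop) (by fun_prop)
  obtain ⟨δ, hδ, hsub⟩ := (isBounded_numericalRange T).isCompact_closure
    |>.exists_cthickening_subset_open hopen
      fun z hz ↦ (hcl z hz).trans_lt (lt_add_of_pos_right m hε)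
  rw [cthickening_closure] at hsub
  exact (isConvexDomain_thickening (convex_numericalRange T) (isBounded_numericalRange T) h0
    hδ).norm_aeval_le (closure_subset_thickening hδ _)
    fun z hz ↦ (hsub (closure_thickening_subset_cthickening _ _ hz)).le

theorem norm_aeval_le_of_forall_mem_numericalRange [Nontrivial E]
    (hp : ∀ z ∈ numericalRange T, ‖p.eval z‖ ≤ m) : ‖aeval T p‖ ≤ (1 + √2) * m := by
  obtain ⟨c, hc⟩ := numericalRange_nonempty T
  let T' : E →L[ℂ] E := algebraMap ℂ _ (-c) + (1 : ℂ) • T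
  have hT' : numericalRange T' = (-c + 1 * ·) '' numericalRange T :=
    numericalRange_algebraMap_add_smul _ _ T
  have haeval : aeval T' (p.comp (X + C c)) = aeval T p := by
    simp [T', aeval_comp]
  rw [← haeval]
  refine norm_aeval_le_of_zero_mem_numericalRange ?_ ?_
  · rw [hT']
    exact ⟨c, hc, by simp⟩
  · rw [hT']
    rintro _ ⟨z, hz, rfl⟩
    simpa using hp z hz

theorem weighted_crouzeix_palencia_general (T : E →L[ℂ] E) (q : ℂ[X]) (x : E) :
    ‖aeval T q x‖ ≤ (1 + √2) * sSup ((fun z ↦ ‖q.eval z‖) '' numericalRange T) * ‖x‖ := by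
  cases subsingleton_or_nontrivial E
  · simp [Subsingleton.elim x 0]
  · exact ContinuousLinearMap.le_of_opNorm_le _ (norm_aeval_le_of_forall_mem_numericalRange
      fun z hz ↦ le_csSup (bddAbove_norm_eval_image_numericalRange T q) (mem_image_of_mem _ hz)) x

end CrouzeixPalencia

section WeightedInner

open scoped MatrixOrder in
theorem exists_linearEquiv_inner_eq_dotProduct {ι : Type*} [Fintype ι] {W : Matrix ι ι ℂ}
    (hW : W.PosDef) :
    ∃ e : (ι → ℂ) ≃ₗ[ℂ] EuclideanSpace ℂ ι, ∀ u v, ⟪e u, e v⟫_ℂ = star u ⬝ᵥ (W *ᵥ v) := by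
  classical
  obtain ⟨S, hS, rfl⟩ :=
    CStarAlgebra.isStrictlyPositive_iff_eq_star_mul_self.1 hW.isStrictlyPositive
  refine ⟨(toLinearEquiv' S hS.invertible).trans (WithLp.linearEquiv 2 ℂ (ι → ℂ)).symm,
    fun u v ↦ ?_⟩
  rw [← mulVec_mulVec, dotProduct_mulVec, star_eq_conjTranspose, ← star_mulVec]
  exact dotProduct_comm _ _

variable {n : ℕ} {V : Type*} [NormedAddCommGroup V] [InnerProductSpace ℂ V]
  {W : Matrix (Fin n) (Fin n) ℂ} {e : (Fin n → ℂ) ≃ₗ[ℂ] V}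

theorem sqrt_re_star_dotProduct_mulVec (he : ∀ u v, ⟪e u, e v⟫_ℂ = star u ⬝ᵥ (W *ᵥ v))
    (v : Fin n → ℂ) : √(star v ⬝ᵥ (W *ᵥ v)).re = ‖e v‖ := by
  rw [← he, norm_eq_sqrt_re_inner (𝕜 := ℂ), RCLike.re_eq_complex_re]

theorem fovW_eq_numericalRange (he : ∀ u v, ⟪e u, e v⟫_ℂ = star u ⬝ᵥ (W *ᵥ v))
    {B : Matrix (Fin n) (Fin n) ℂ} {T : V →L[ℂ] V} (hT : ∀ v, T (e v) = e (B *ᵥ v)) :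
    fovW W B = numericalRange T := by
  ext c
  simp only [fovW, numericalRange, mem_ofPred_eq, e.surjective.exists, hT, he, ne_eq,
    LinearEquiv.map_eq_zero_iff]

end WeightedInner

/-- weighted Crouzeix–Palencia bound: for hpd `W`, any matrix `B`,
any polynomial `q` and any vector `x`,
`‖q(B) x‖_W ≤ (1 + √2) · (sup_{z ∈ FOV^W(B)} |q(z)|) · ‖x‖_W`,
where `‖u‖_W = √(Re (uᴴ W u))`. -/
theorem weighted_crouzeix_palencia {n : ℕ}
    (W B : Matrix (Fin n) (Fin n) ℂ) (hW : W.PosDef)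
    (q : Polynomial ℂ) (x : Fin n → ℂ) :
    Real.sqrt ((star ((aeval B q) *ᵥ x) ⬝ᵥ (W *ᵥ ((aeval B q) *ᵥ x))).re) ≤
      (1 + Real.sqrt 2) *
        sSup ((fun z : ℂ => ‖q.eval z‖) '' fovW W B) *
        Real.sqrt ((star x ⬝ᵥ (W *ᵥ x)).re) := by
  obtain ⟨e, he⟩ := exists_linearEquiv_inner_eq_dotProduct hW
  let φ := (toLinAlgEquiv'.trans (e.conjAlgEquiv ℂ)).trans
    (Module.End.toContinuousLinearMap (𝕜 := ℂ) (EuclideanSpace ℂ (Fin n)))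
  have hφ (A : Matrix (Fin n) (Fin n) ℂ) (v : Fin n → ℂ) : φ A (e v) = e (A *ᵥ v) := by
    change e (toLin' A (e.symm (e v))) = _
    rw [e.symm_apply_apply, toLin'_apply]
  rw [sqrt_re_star_dotProduct_mulVec he, sqrt_re_star_dotProduct_mulVec he,
    fovW_eq_numericalRange he (hφ B), ← hφ, ← aeval_algHom_apply]
  exact weighted_crouzeix_palencia_general (φ B) q (e x)
end

section
/- Let N be a skew-Hermitian n×n complex matrix and H an hpd n×n complex matrix. Then for every x ∈ ℂⁿ, the quantity xᴴ H N H x is purely imaginary and satisfies |xᴴ H N H x| ≤ ρ(NH) · (xᴴ H x). -/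
open Matrix
open scoped ComplexOrder

/-!
Factor `H = Bᴴ * B`. With `K = B * N * Bᴴ` and `y = B *ᵥ x` the two quadratic forms become `yᴴ K y`
and `yᴴ y`. The matrix `K` is skew-Hermitian, hence normal, so its operator norm is its spectral
radius, and `K = B * (N * Bᴴ)` has the same spectrum as `(N * Bᴴ) * B = N * H`.
-/

theorem norm_eq_sSup_norm_image_spectrum {𝕜 A : Type*} {p : A → Prop} [RCLike 𝕜]
    [NormedRing A] [StarRing A] [NormedAlgebra 𝕜 A] [IsometricContinuousFunctionalCalculus 𝕜 A p]
    {a : A} (ha : p a) :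
    ‖a‖ = sSup ((fun z : 𝕜 => ‖z‖) '' spectrum 𝕜 a) := by
  rcases subsingleton_or_nontrivial A with _ | _
  · simp [Subsingleton.elim a 0]
  · exact (IsometricContinuousFunctionalCalculus.isGreatest_norm_spectrum a ha).csSup_eq.symm

theorem spectrum_matrix_mul_comm {ι K : Type*} [Fintype ι] [DecidableEq ι] [Field K]
    (A B : Matrix ι ι K) : spectrum K (A * B) = spectrum K (B * A) := by
  ext r
  rw [mem_spectrum_iff_isRoot_charpoly, charpoly_mul_comm, ← mem_spectrum_iff_isRoot_charpoly]

theorem star_dotProduct_conjTranspose_mul_mulVec {l m n R : Type*} [Fintype l] [Fintype m]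
    [Fintype n] [NonUnitalSemiring R] [StarRing R] (B : Matrix m l R) (C : Matrix m n R)
    (x : l → R) (y : n → R) :
    star x ⬝ᵥ (Bᴴ * C) *ᵥ y = star (B *ᵥ x) ⬝ᵥ C *ᵥ y := by
  rw [star_mulVec, ← dotProduct_mulVec, mulVec_mulVec]

section QuadraticForm

variable {ι 𝕜 : Type*} [Fintype ι] [RCLike 𝕜]

theorem re_star_dotProduct_mulVec_eq_zero_of_conjTranspose_eq_neg {A : Matrix ι ι 𝕜}
    (hA : Aᴴ = -A) (x : ι → 𝕜) :
    RCLike.re (star x ⬝ᵥ A *ᵥ x) = 0 := by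
  have star_eq_neg : star (star x ⬝ᵥ A *ᵥ x) = -(star x ⬝ᵥ A *ᵥ x) := by
    rw [← star_dotProduct, star_mulVec, hA, ← dotProduct_mulVec, neg_mulVec, dotProduct_neg]
  have re_eq_neg := congrArg RCLike.re star_eq_neg
  rw [RCLike.star_def, RCLike.conj_re, map_neg] at re_eq_neg
  linarith

open scoped Matrix.Norms.L2Operator in
theorem norm_star_dotProduct_mulVec_le [DecidableEq ι] (A : Matrix ι ι 𝕜) (x : ι → 𝕜) :
    ‖star x ⬝ᵥ A *ᵥ x‖ ≤ ‖A‖ * RCLike.re (star x ⬝ᵥ x) := by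
  have inner_eq (y : ι → 𝕜) : star x ⬝ᵥ y = inner 𝕜 (WithLp.toLp 2 x) (WithLp.toLp 2 y) := by
    rw [EuclideanSpace.inner_toLp_toLp, dotProduct_comm]
  rw [inner_eq, inner_eq, inner_self_eq_norm_mul_norm]
  calc ‖inner 𝕜 (WithLp.toLp 2 x) (WithLp.toLp 2 (A *ᵥ x))‖
      ≤ ‖WithLp.toLp 2 x‖ * ‖WithLp.toLp 2 (A *ᵥ x)‖ := norm_inner_le_norm _ _
    _ ≤ ‖WithLp.toLp 2 x‖ * (‖A‖ * ‖WithLp.toLp 2 x‖) := by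
      gcongr
      exact l2_opNorm_mulVec A (WithLp.toLp 2 x)
    _ = ‖A‖ * (‖WithLp.toLp 2 x‖ * ‖WithLp.toLp 2 x‖) := by ring

end QuadraticForm

section Complex

variable {ι : Type*} [Fintype ι] [DecidableEq ι]

open scoped Matrix.Norms.L2Operator in
theorem norm_star_dotProduct_mulVec_le_sSup_spectrum {A : Matrix ι ι ℂ} (hA : IsStarNormal A)
    (x : ι → ℂ) :
    ‖star x ⬝ᵥ A *ᵥ x‖ ≤
      sSup ((fun z : ℂ => ‖z‖) '' spectrum ℂ A) * (star x ⬝ᵥ x).re := by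
  rw [← norm_eq_sSup_norm_image_spectrum hA]
  exact norm_star_dotProduct_mulVec_le A x

theorem norm_star_dotProduct_mulVec_le_of_isStarNormal_congruence {B N : Matrix ι ι ℂ}
    (hBN : IsStarNormal (B * N * Bᴴ)) (x : ι → ℂ) :
    ‖star x ⬝ᵥ (Bᴴ * B * N * (Bᴴ * B)) *ᵥ x‖ ≤
      sSup ((fun z : ℂ => ‖z‖) '' spectrum ℂ (N * (Bᴴ * B))) *
        (star x ⬝ᵥ (Bᴴ * B) *ᵥ x).re := by
  have form_eq : star x ⬝ᵥ (Bᴴ * B * N * (Bᴴ * B)) *ᵥ x =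
      star (B *ᵥ x) ⬝ᵥ (B * N * Bᴴ) *ᵥ (B *ᵥ x) := by
    rw [mulVec_mulVec, ← star_dotProduct_conjTranspose_mul_mulVec]
    simp only [Matrix.mul_assoc]
  have spectrum_eq : spectrum ℂ (N * (Bᴴ * B)) = spectrum ℂ (B * N * Bᴴ) := by
    rw [← Matrix.mul_assoc, spectrum_matrix_mul_comm, Matrix.mul_assoc]
  rw [form_eq, spectrum_eq, star_dotProduct_conjTranspose_mul_mulVec]
  exact norm_star_dotProduct_mulVec_le_sSup_spectrum hBN (B *ᵥ x)

open scoped MatrixOrder Matrix.Norms.L2Operator in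
theorem skew_part_rayleigh_bound_general {N H : Matrix ι ι ℂ} (hN : Nᴴ = -N)
    (hH : H.PosSemidef) (x : ι → ℂ) :
    (star x ⬝ᵥ ((H * N * H) *ᵥ x)).re = 0 ∧
    ‖star x ⬝ᵥ ((H * N * H) *ᵥ x)‖ ≤
      sSup ((fun z : ℂ => ‖z‖) '' spectrum ℂ (N * H)) * (star x ⬝ᵥ (H *ᵥ x)).re := by
  have skew : (H * N * H)ᴴ = -(H * N * H) := by
    simp [conjTranspose_mul, hN, hH.isHermitian.eq, Matrix.mul_assoc]
  obtain ⟨B, rfl⟩ := CStarAlgebra.nonneg_iff_eq_star_mul_self.mp hH.nonneg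
  have normal : IsStarNormal (B * N * Bᴴ) :=
    skewAdjoint.isStarNormal_of_mem (skewAdjoint.conjugate (skewAdjoint.mem_iff.mpr hN) B)
  exact ⟨re_star_dotProduct_mulVec_eq_zero_of_conjTranspose_eq_neg skew x,
    norm_star_dotProduct_mulVec_le_of_isStarNormal_congruence normal x⟩

end Complex

/-- For skew-Hermitian `N` and hpd `H`, the quantity `xᴴ H N H x` is purely
imaginary and `|xᴴ H N H x| ≤ ρ(NH) · xᴴ H x`, where `ρ(NH)` is the spectral radius of
`N * H` (the maximum modulus of its eigenvalues). -/
theorem skew_part_rayleigh_bound {n : ℕ}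
    (N H : Matrix (Fin n) (Fin n) ℂ) (hN : Nᴴ = -N) (hH : H.PosDef)
    (x : Fin n → ℂ) :
    (star x ⬝ᵥ ((H * N * H) *ᵥ x)).re = 0 ∧
    ‖star x ⬝ᵥ ((H * N * H) *ᵥ x)‖ ≤
      sSup ((fun z : ℂ => ‖z‖) '' spectrum ℂ (N * H)) * (star x ⬝ᵥ (H *ᵥ x)).re :=
  skew_part_rayleigh_bound_general hN hH.posSemidef x
end

section
/- Let M be an hpd n×n complex matrix and N a skew-Hermitian n×n complex matrix. Then for every x ∈ ℂⁿ, |xᴴ N x| ≤ ρ(M⁻¹N) · (xᴴ M x). -/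
open Matrix
open scoped ComplexOrder

/-!
Factor `M⁻¹ = w * wᴴ` with `w` invertible and substitute `x = w *ᵥ y`. The forms `xᴴ N x` and
`xᴴ M x` become `yᴴ S y` and `yᴴ y` with `S = wᴴ * N * w`, so the quotient of the two is at most
`‖S‖`. Since `S` is normal, `‖S‖` is its spectral radius, and `S` is similar to `w * wᴴ * N`.
-/

theorem isStarNormal_star_mul_mul {A : Type*} [Semigroup A] [StarMul A] {w a : A}
    (ha : a * (w * star w) * star a = star a * (w * star w) * a) :
    IsStarNormal (star w * a * w) where
  star_comm_self :=
    calc star (star w * a * w) * (star w * a * w)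
        = star w * (star a * (w * star w) * a) * w := by simp only [star_mul, star_star, mul_assoc]
      _ = star w * (a * (w * star w) * star a) * w := by rw [ha]
      _ = star w * a * w * star (star w * a * w) := by simp only [star_mul, star_star, mul_assoc]

theorem spectrum_mul_unit_comm (R : Type*) {A : Type*} [CommSemiring R] [Ring A] [Algebra R A]
    (a : A) (u : Aˣ) : spectrum R (a * u) = spectrum R (u * a) := by
  rw [← spectrum.units_conjugate (a := a * u) (u := u), mul_assoc, Units.mul_inv_cancel_right]

theorem sSup_norm_image_spectrum_eq_norm {A : Type*} [CStarAlgebra A] (a : A) [IsStarNormal a] :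
    sSup ((fun z : ℂ => ‖z‖) '' spectrum ℂ a) = ‖a‖ := by
  cases subsingleton_or_nontrivial A
  · simp [Subsingleton.elim a 0]
  · exact (IsometricContinuousFunctionalCalculus.isGreatest_norm_spectrum a).csSup_eq

theorem star_mulVec_dotProduct_mulVec_mulVec {m n R : Type*} [Fintype m] [Fintype n]
    [NonUnitalSemiring R] [StarRing R] (A : Matrix m m R) (B : Matrix m n R) (y : n → R) :
    star (B *ᵥ y) ⬝ᵥ (A *ᵥ (B *ᵥ y)) = star y ⬝ᵥ ((Bᴴ * A * B) *ᵥ y) := by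
  rw [star_mulVec, ← dotProduct_mulVec, mulVec_mulVec, mulVec_mulVec]

section L2OpNorm

open scoped Matrix.Norms.L2Operator MatrixOrder

variable {n 𝕜 : Type*} [Fintype n] [DecidableEq n] [RCLike 𝕜]

theorem norm_star_dotProduct_mulVec_le_s8 (S : Matrix n n 𝕜) (y : n → 𝕜) :
    ‖star y ⬝ᵥ (S *ᵥ y)‖ ≤ ‖S‖ * RCLike.re (star y ⬝ᵥ y) := by
  have star_dotProduct_eq_inner (v : n → 𝕜) :
      star y ⬝ᵥ v = inner 𝕜 (WithLp.toLp 2 y) (WithLp.toLp 2 v) := by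
    rw [EuclideanSpace.inner_toLp_toLp, dotProduct_comm]
  rw [star_dotProduct_eq_inner, star_dotProduct_eq_inner, inner_self_eq_norm_sq]
  calc ‖inner 𝕜 (WithLp.toLp 2 y) (WithLp.toLp 2 (S *ᵥ y))‖
      ≤ ‖WithLp.toLp 2 y‖ * ‖WithLp.toLp 2 (S *ᵥ y)‖ := norm_inner_le_norm _ _
    _ ≤ ‖WithLp.toLp 2 y‖ * (‖S‖ * ‖WithLp.toLp 2 y‖) := by
        gcongr
        exact l2_opNorm_mulVec S (WithLp.toLp 2 y)
    _ = ‖S‖ * ‖WithLp.toLp 2 y‖ ^ 2 := by ring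

theorem exists_units_inv_eq_mul_conjTranspose {M : Matrix n n 𝕜} (hM : M.PosDef) :
    ∃ w : (Matrix n n 𝕜)ˣ, M⁻¹ = w.val * w.valᴴ := by
  obtain ⟨_, ⟨w, rfl⟩, hw⟩ :=
    CStarAlgebra.isStrictlyPositive_iff_eq_mul_star_self.1 hM.inv.isStrictlyPositive
  exact ⟨w, hw⟩

theorem conjTranspose_mul_mul_eq_one_of_inv_eq {R : Type*} [CommRing R] [StarRing R]
    {M w : Matrix n n R} (hM : IsUnit M) (hw : M⁻¹ = w * wᴴ) : wᴴ * M * w = 1 := by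
  rw [mul_assoc, mul_eq_one_comm, mul_assoc, ← hw]
  exact mul_nonsing_inv M ((isUnit_iff_isUnit_det M).1 hM)

/-- The hypothesis `hN` says that `M⁻¹ * N` is normal for the inner product `(x, y) ↦ xᴴ M y`, in
which its adjoint is `M⁻¹ * Nᴴ`. -/
theorem skew_rayleigh_bound_MinvN_general {M N : Matrix n n ℂ} (hM : M.PosDef)
    (hN : N * M⁻¹ * Nᴴ = Nᴴ * M⁻¹ * N) (x : n → ℂ) :
    ‖star x ⬝ᵥ (N *ᵥ x)‖ ≤
      sSup ((fun z : ℂ => ‖z‖) '' spectrum ℂ (M⁻¹ * N)) * (star x ⬝ᵥ (M *ᵥ x)).re := by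
  obtain ⟨w, hw⟩ := exists_units_inv_eq_mul_conjTranspose hM
  obtain ⟨y, rfl⟩ := mulVec_surjective_iff_isUnit.2 w.isUnit x
  have hwM : w.valᴴ * M * w.val = 1 := conjTranspose_mul_mul_eq_one_of_inv_eq hM.isUnit hw
  rw [hw] at hN
  have : IsStarNormal (w.valᴴ * N * w.val) := isStarNormal_star_mul_mul hN
  have hnorm : sSup ((fun z : ℂ => ‖z‖) '' spectrum ℂ (M⁻¹ * N)) = ‖w.valᴴ * N * w.val‖ := by
    rw [hw, mul_assoc, ← spectrum_mul_unit_comm, sSup_norm_image_spectrum_eq_norm]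
  rw [hnorm, star_mulVec_dotProduct_mulVec_mulVec, star_mulVec_dotProduct_mulVec_mulVec, hwM,
    one_mulVec]
  exact norm_star_dotProduct_mulVec_le_s8 _ y

end L2OpNorm

/-- For hpd `M` and skew-Hermitian `N`, for every vector `x`,
`|xᴴ N x| ≤ ρ(M⁻¹ N) · xᴴ M x`, where `ρ(M⁻¹N)` is the spectral radius of `M⁻¹ * N`. -/
theorem skew_rayleigh_bound_MinvN {n : ℕ}
    (M N : Matrix (Fin n) (Fin n) ℂ) (hM : M.PosDef) (hN : Nᴴ = -N)
    (x : Fin n → ℂ) :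
    ‖star x ⬝ᵥ (N *ᵥ x)‖ ≤
      sSup ((fun z : ℂ => ‖z‖) '' spectrum ℂ (M⁻¹ * N)) * (star x ⬝ᵥ (M *ᵥ x)).re :=
  skew_rayleigh_bound_MinvN_general hM (by simp [hN]) x
end

section
/- Let H and M be hpd n×n complex matrices and N a skew-Wellian—skew-Hermitian—n×n complex matrix. Then ρ(NH) ≤ ρ(M⁻¹N) · λ_max(HM). Consequently, the rectangle Ω₁ := [λ_min(HM), λ_max(HM)] + i[−ρ(NH), ρ(NH)] is contained in the rectangle Ω₂ := [λ_min(HM), λ_max(HM)] + i[−ρ(M⁻¹N)λ_max(HM), ρ(M⁻¹N)λ_max(HM)]. -/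
open Matrix
open scoped ComplexOrder

/-!
Factor `h = d d*` and `m = b* b` with `b` invertible, and put `s = b*⁻¹ n b⁻¹` and `e = b d`.
Cyclic permutation of the factors of a product preserves the spectral radius, so that
`ρ(n h) = ρ(d* n d) = ρ(e* s e)`, `ρ(m⁻¹ n) = ρ(s)` and `ρ(h m) = ρ(e* e)`. As `s` and `e* e` are
normal, their spectral radii are their norms, and `‖e* s e‖ ≤ ‖s‖ ‖e‖² = ‖s‖ ‖e* e‖`.
Everything takes place in a unital C⋆-algebra, where `s` is normal exactly when
`n m⁻¹ n* = n* m⁻¹ n`, as is the case for `n* = -n`.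
-/

section SpectralRadius

variable {𝕜 A : Type*} [NormedField 𝕜] [Ring A] [Algebra 𝕜 A]

theorem spectralRadius_mul_comm (a b : A) :
    spectralRadius 𝕜 (a * b) = spectralRadius 𝕜 (b * a) := by
  suffices h : ∀ x y : A, spectralRadius 𝕜 (x * y) ≤ spectralRadius 𝕜 (y * x) from
    (h a b).antisymm (h b a)
  refine fun x y ↦ iSup₂_le fun k hk ↦ ?_
  rcases eq_or_ne k 0 with rfl | hk0
  · simp
  · have hk' : k ∈ spectrum 𝕜 (y * x) \ {0} := by
      rw [← spectrum.nonzero_mul_comm]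
      exact ⟨hk, hk0⟩
    exact le_iSup₂ (f := fun k (_ : k ∈ spectrum 𝕜 (y * x)) ↦ (‖k‖₊ : ENNReal)) k hk'.1

theorem sSup_norm_image_spectrum (a : A) :
    sSup (norm '' spectrum 𝕜 a) = (spectralRadius 𝕜 a).toReal := by
  rw [spectralRadius, iSup_subtype', ENNReal.toReal_iSup fun _ ↦ ENNReal.coe_ne_top, sSup_image']
  rfl

end SpectralRadius

theorem norm_image_eq_setOf_ofReal_mem {s : Set ℂ} (hs : ∀ z ∈ s, 0 ≤ z) :
    norm '' s = {r : ℝ | (r : ℂ) ∈ s} := by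
  ext r
  constructor
  · rintro ⟨z, hz, rfl⟩
    rwa [Set.mem_ofPred_eq, Complex.norm_of_nonneg' (hs z hz)]
  · exact fun hr ↦ ⟨r, hr, Complex.norm_of_nonneg (Complex.zero_le_real.mp (hs r hr))⟩

theorem isStarNormal_inv_star_mul_mul_inv {A : Type*} [Monoid A] [StarMul A] (b : Aˣ) {n : A}
    (hn : n * ↑(star b * b)⁻¹ * star n = star n * ↑(star b * b)⁻¹ * n) :
    IsStarNormal (↑(star b)⁻¹ * n * ↑b⁻¹ : A) := by
  have hstar : star (↑(star b)⁻¹ * n * ↑b⁻¹ : A) = ↑(star b)⁻¹ * star n * ↑b⁻¹ := by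
    simp only [star_mul, ← Units.coe_star, star_inv, star_star, mul_assoc]
  refine ⟨?_⟩
  rw [hstar, Commute, SemiconjBy]
  simpa only [_root_.mul_inv_rev, Units.val_mul, mul_assoc] using
    congrArg (fun x : A ↦ ↑(star b)⁻¹ * x * ↑b⁻¹) hn.symm

section CStarAlgebra

variable {A : Type*} [CStarAlgebra A]

theorem spectralRadius_le_nnnorm_of_cstarAlgebra (a : A) : spectralRadius ℂ a ≤ ‖a‖₊ := by
  cases subsingleton_or_nontrivial A
  · simp
  · exact spectrum.spectralRadius_le_nnnorm a

theorem spectralRadius_star_mul_mul_le (s e : A) [IsStarNormal s] :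
    spectralRadius ℂ (star e * s * e) ≤ spectralRadius ℂ s * spectralRadius ℂ (star e * e) := by
  have hnorm : ‖star e * s * e‖₊ ≤ ‖s‖₊ * ‖star e * e‖₊ :=
    calc ‖star e * s * e‖₊ ≤ ‖star e‖₊ * ‖s‖₊ * ‖e‖₊ :=
          (nnnorm_mul_le _ _).trans (by gcongr; exact nnnorm_mul_le _ _)
      _ = ‖s‖₊ * ‖star e * e‖₊ := by rw [CStarRing.nnnorm_star_mul_self, nnnorm_star]; ring
  rw [IsStarNormal.spectralRadius_eq_nnnorm s,
    (IsSelfAdjoint.star_mul_self e).spectralRadius_eq_nnnorm]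
  exact (spectralRadius_le_nnnorm_of_cstarAlgebra _).trans (mod_cast hnorm)

theorem spectralRadius_mul_mul_star_le (b : Aˣ) (d : A) {n : A}
    (hn : n * ↑(star b * b)⁻¹ * star n = star n * ↑(star b * b)⁻¹ * n) :
    spectralRadius ℂ (n * (d * star d)) ≤
      spectralRadius ℂ (↑(star b * b)⁻¹ * n) * spectralRadius ℂ (d * star d * ↑(star b * b)) := by
  set s : A := ↑(star b)⁻¹ * n * ↑b⁻¹ with hs
  set e : A := b * d with he
  have : IsStarNormal s := isStarNormal_inv_star_mul_mul_inv b hn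
  have hcongr : star e * s * e = star d * n * d := by
    simp only [hs, he, star_mul, ← Units.coe_star, mul_assoc, Units.mul_inv_cancel_left,
      Units.inv_mul_cancel_left]
  have hs_radius : spectralRadius ℂ s = spectralRadius ℂ (↑(star b * b)⁻¹ * n) := by
    rw [hs, spectralRadius_mul_comm, _root_.mul_inv_rev, Units.val_mul, mul_assoc]
  have he_radius : spectralRadius ℂ (star e * e) =
      spectralRadius ℂ (d * star d * ↑(star b * b)) := by
    rw [spectralRadius_mul_comm, he, star_mul, mul_assoc, spectralRadius_mul_comm]
    simp only [Units.val_mul, Units.coe_star, mul_assoc]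
  calc spectralRadius ℂ (n * (d * star d))
      = spectralRadius ℂ (star e * s * e) := by
        rw [hcongr, ← mul_assoc, spectralRadius_mul_comm, mul_assoc]
    _ ≤ spectralRadius ℂ s * spectralRadius ℂ (star e * e) := spectralRadius_star_mul_mul_le s e
    _ = _ := by rw [hs_radius, he_radius]

variable [PartialOrder A] [StarOrderedRing A]

theorem nonneg_of_mem_spectrum_mul {a b : A} (ha : 0 ≤ a) (hb : 0 ≤ b) {z : ℂ}
    (hz : z ∈ spectrum ℂ (a * b)) : 0 ≤ z := by
  obtain ⟨d, rfl⟩ := CStarAlgebra.nonneg_iff_eq_mul_star_self.mp ha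
  have hz' := spectrum_subset_quasispectrum ℂ _ hz
  rw [mul_assoc, quasispectrum.mul_comm] at hz'
  exact quasispectrum_nonneg_of_nonneg _ (star_left_conjugate_nonneg hb d) z hz'

theorem spectralRadius_mul_le_of_nonneg {h n : A} {m : Aˣ} (hh : 0 ≤ h) (hm : 0 ≤ (m : A))
    (hn : n * ↑m⁻¹ * star n = star n * ↑m⁻¹ * n) :
    spectralRadius ℂ (n * h) ≤ spectralRadius ℂ (↑m⁻¹ * n) * spectralRadius ℂ (h * m) := by
  obtain ⟨d, rfl⟩ := CStarAlgebra.nonneg_iff_eq_mul_star_self.mp hh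
  obtain ⟨_, ⟨b, rfl⟩, hmb⟩ :=
    CStarAlgebra.isStrictlyPositive_iff_eq_star_mul_self.mp ⟨hm, m.isUnit⟩
  obtain rfl : m = star b * b := Units.ext hmb
  exact spectralRadius_mul_mul_star_le b d hn

theorem sSup_norm_image_spectrum_mul_le {h n : A} {m : Aˣ} (hh : 0 ≤ h) (hm : 0 ≤ (m : A))
    (hn : n * ↑m⁻¹ * star n = star n * ↑m⁻¹ * n) :
    sSup (norm '' spectrum ℂ (n * h)) ≤
      sSup (norm '' spectrum ℂ (↑m⁻¹ * n)) * sSup {r : ℝ | (r : ℂ) ∈ spectrum ℂ (h * m)} := by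
  have hfin (a : A) : spectralRadius ℂ a ≠ ⊤ :=
    ne_top_of_le_ne_top ENNReal.coe_ne_top (spectralRadius_le_nnnorm_of_cstarAlgebra a)
  rw [← norm_image_eq_setOf_ofReal_mem fun _ ↦ nonneg_of_mem_spectrum_mul hh hm]
  simp only [sSup_norm_image_spectrum, ← ENNReal.toReal_mul]
  exact ENNReal.toReal_mono (ENNReal.mul_ne_top (hfin _) (hfin _))
    (spectralRadius_mul_le_of_nonneg hh hm hn)

theorem rectangle_Omega1_subset_Omega2_general {h n : A} {m : Aˣ} (hh : 0 ≤ h)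
    (hm : 0 ≤ (m : A)) (hn : n * ↑m⁻¹ * star n = star n * ↑m⁻¹ * n) :
    sSup (norm '' spectrum ℂ (n * h)) ≤
      sSup (norm '' spectrum ℂ (↑m⁻¹ * n)) * sSup {r : ℝ | (r : ℂ) ∈ spectrum ℂ (h * m)} ∧
    {z : ℂ | sInf {r : ℝ | (r : ℂ) ∈ spectrum ℂ (h * m)} ≤ z.re ∧
        z.re ≤ sSup {r : ℝ | (r : ℂ) ∈ spectrum ℂ (h * m)} ∧
        |z.im| ≤ sSup (norm '' spectrum ℂ (n * h))} ⊆
    {z : ℂ | sInf {r : ℝ | (r : ℂ) ∈ spectrum ℂ (h * m)} ≤ z.re ∧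
        z.re ≤ sSup {r : ℝ | (r : ℂ) ∈ spectrum ℂ (h * m)} ∧
        |z.im| ≤ sSup (norm '' spectrum ℂ (↑m⁻¹ * n)) *
          sSup {r : ℝ | (r : ℂ) ∈ spectrum ℂ (h * m)}} := by
  have hle := sSup_norm_image_spectrum_mul_le hh hm hn
  exact ⟨hle, fun z ⟨hmin, hmax, him⟩ ↦ ⟨hmin, hmax, him.trans hle⟩⟩

end CStarAlgebra

/-- For hpd `H`, `M` and skew-Hermitian `N`,
`ρ(NH) ≤ ρ(M⁻¹N) · λ_max(HM)`, and consequently the rectangle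
`Ω₁ = [λ_min(HM), λ_max(HM)] + i[−ρ(NH), ρ(NH)]` is contained in the rectangle
`Ω₂ = [λ_min(HM), λ_max(HM)] + i[−ρ(M⁻¹N)λ_max(HM), ρ(M⁻¹N)λ_max(HM)]`. -/
theorem rectangle_Omega1_subset_Omega2 {n : ℕ}
    (H M N : Matrix (Fin n) (Fin n) ℂ) (hH : H.PosDef) (hM : M.PosDef)
    (hN : Nᴴ = -N) :
    sSup (norm '' spectrum ℂ (N * H)) ≤
      sSup (norm '' spectrum ℂ (M⁻¹ * N)) *
        sSup {r : ℝ | (r : ℂ) ∈ spectrum ℂ (H * M)} ∧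
    {z : ℂ | sInf {r : ℝ | (r : ℂ) ∈ spectrum ℂ (H * M)} ≤ z.re ∧
        z.re ≤ sSup {r : ℝ | (r : ℂ) ∈ spectrum ℂ (H * M)} ∧
        |z.im| ≤ sSup (norm '' spectrum ℂ (N * H))} ⊆
    {z : ℂ | sInf {r : ℝ | (r : ℂ) ∈ spectrum ℂ (H * M)} ≤ z.re ∧
        z.re ≤ sSup {r : ℝ | (r : ℂ) ∈ spectrum ℂ (H * M)} ∧
        |z.im| ≤ sSup (norm '' spectrum ℂ (M⁻¹ * N)) *
          sSup {r : ℝ | (r : ℂ) ∈ spectrum ℂ (H * M)}} := by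
  open scoped Matrix.Norms.L2Operator MatrixOrder in
  obtain ⟨m, rfl⟩ := hM.isUnit
  rw [← coe_units_inv]
  exact rectangle_Omega1_subset_Omega2_general hH.posSemidef.nonneg hM.posSemidef.nonneg
    (by simp [star_eq_conjTranspose, hN])
end

section
/- Let B be an hpd n×n complex matrix, N a skew-Hermitian n×n complex matrix, and τ ≥ 0. Let (x_k)_{k∈F} be a finite family of vectors such that N x_k = λ_k B x_k with |λ_k| ≤ τ for each k, and such that the family is pairwise B-orthogonal (x_jᴴ B x_k = 0 for j ≠ k). Then for every x in the span of {x_k : k ∈ F}, |xᴴ N x| ≤ τ · (xᴴ B x). -/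
open Matrix
open scoped ComplexOrder

/-!
Expanding `x = ∑ k, w k` in scaled eigenvectors, orthogonality kills the cross terms of both
quadratic forms: those of `B` by assumption, those of `N` because `N (w k)` is a multiple of
`B (w k)`. So `xᴴ N x = ∑ k, λ k * (w k)ᴴ B (w k)` is a combination of the `λ k` whose nonnegative
weights sum to `xᴴ B x`, and the triangle inequality finishes the proof.
-/

section

variable {ι n : Type*} [Fintype n]

theorem sum_dotProduct_mulVec_sum_of_pairwise {m R : Type*} [Fintype m] [NonUnitalSemiring R]
    (M : Matrix m n R) (s : Finset ι) {u : ι → m → R} {w : ι → n → R}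
    (horth : (s : Set ι).Pairwise fun j k => u j ⬝ᵥ (M *ᵥ w k) = 0) :
    (∑ k ∈ s, u k) ⬝ᵥ (M *ᵥ ∑ k ∈ s, w k) = ∑ k ∈ s, u k ⬝ᵥ (M *ᵥ w k) := by
  rw [sum_dotProduct]
  refine Finset.sum_congr rfl fun j hj => ?_
  rw [mulVec_sum, dotProduct_sum]
  exact Finset.sum_eq_single_of_mem j hj fun k hk hkj => horth hj hk hkj.symm

variable {𝕜 : Type*} [RCLike 𝕜] {B N : Matrix n n 𝕜}

theorem norm_dotProduct_mulVec_of_mulVec_eq_smul (hB : B.PosSemidef) {w : n → 𝕜} {μ : 𝕜}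
    (heig : N *ᵥ w = μ • (B *ᵥ w)) :
    ‖star w ⬝ᵥ (N *ᵥ w)‖ = ‖μ‖ * RCLike.re (star w ⬝ᵥ (B *ᵥ w)) := by
  have norm_eq_re : ‖star w ⬝ᵥ (B *ᵥ w)‖ = RCLike.re (star w ⬝ᵥ (B *ᵥ w)) := by
    simpa only [RCLike.ofReal_re] using
      congrArg RCLike.re (RCLike.norm_of_nonneg' (hB.dotProduct_mulVec_nonneg w))
  rw [heig, dotProduct_smul, norm_smul, norm_eq_re]

theorem norm_dotProduct_mulVec_sum_le_of_mulVec_eq_smul (hB : B.PosSemidef) {τ : ℝ}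
    (s : Finset ι) {w : ι → n → 𝕜} {lam : ι → 𝕜}
    (heig : ∀ k ∈ s, N *ᵥ w k = lam k • (B *ᵥ w k)) (hbound : ∀ k ∈ s, ‖lam k‖ ≤ τ)
    (horth : (s : Set ι).Pairwise fun j k => star (w j) ⬝ᵥ (B *ᵥ w k) = 0) :
    ‖star (∑ k ∈ s, w k) ⬝ᵥ (N *ᵥ ∑ k ∈ s, w k)‖ ≤
      τ * RCLike.re (star (∑ k ∈ s, w k) ⬝ᵥ (B *ᵥ ∑ k ∈ s, w k)) := by
  have horthN : (s : Set ι).Pairwise fun j k => star (w j) ⬝ᵥ (N *ᵥ w k) = 0 :=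
    fun j hj k hk hjk => by simp only [heig k hk, dotProduct_smul, horth hj hk hjk, smul_zero]
  rw [star_sum, sum_dotProduct_mulVec_sum_of_pairwise N s horthN,
    sum_dotProduct_mulVec_sum_of_pairwise B s horth, map_sum, Finset.mul_sum]
  refine norm_sum_le_of_le s fun k hk => ?_
  rw [norm_dotProduct_mulVec_of_mulVec_eq_smul hB (heig k hk)]
  exact mul_le_mul_of_nonneg_right (hbound k hk) (hB.re_dotProduct_nonneg (w k))

theorem skew_rayleigh_bound_on_deflated_space_general (hB : B.PosSemidef) {τ : ℝ}
    {v : ι → n → 𝕜} {lam : ι → 𝕜} (heig : ∀ k, N *ᵥ v k = lam k • (B *ᵥ v k))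
    (hbound : ∀ k, ‖lam k‖ ≤ τ) (horth : Pairwise fun j k => star (v j) ⬝ᵥ (B *ᵥ v k) = 0)
    {x : n → 𝕜} (hx : x ∈ Submodule.span 𝕜 (Set.range v)) :
    ‖star x ⬝ᵥ (N *ᵥ x)‖ ≤ τ * RCLike.re (star x ⬝ᵥ (B *ᵥ x)) := by
  obtain ⟨c, rfl⟩ := Finsupp.mem_span_range_iff_exists_finsupp.1 hx
  have heig_smul (k : ι) : N *ᵥ (c k • v k) = lam k • (B *ᵥ (c k • v k)) := by
    rw [mulVec_smul, mulVec_smul, heig, smul_comm]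
  have horth_smul : Pairwise fun j k => star (c j • v j) ⬝ᵥ (B *ᵥ (c k • v k)) = 0 :=
    fun j k hjk => by
      simp only [star_smul, smul_dotProduct, mulVec_smul, dotProduct_smul, horth hjk, smul_zero]
  exact norm_dotProduct_mulVec_sum_le_of_mulVec_eq_smul hB c.support (fun k _ => heig_smul k)
    (fun k _ => hbound k) (horth_smul.set_pairwise _)

end

/-- Let `B` be hpd, `N` skew-Hermitian and `τ ≥ 0`. If `(v k)` is a finite
pairwise `B`-orthogonal family of generalized eigenvectors `N (v k) = λ k • B (v k)` with
`|λ k| ≤ τ`, then for every `x` in their span, `|xᴴ N x| ≤ τ · xᴴ B x`. -/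
theorem skew_rayleigh_bound_on_deflated_space {n : ℕ}
    (B N : Matrix (Fin n) (Fin n) ℂ) (hB : B.PosDef) (hN : Nᴴ = -N)
    (τ : ℝ) (hτ : 0 ≤ τ) {ι : Type*} [Fintype ι]
    (v : ι → Fin n → ℂ) (lam : ι → ℂ)
    (heig : ∀ k, N *ᵥ v k = lam k • (B *ᵥ v k))
    (hbound : ∀ k, ‖lam k‖ ≤ τ)
    (horth : ∀ j k, j ≠ k → star (v j) ⬝ᵥ (B *ᵥ v k) = 0)
    (x : Fin n → ℂ) (hx : x ∈ Submodule.span ℂ (Set.range v)) :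
    ‖star x ⬝ᵥ (N *ᵥ x)‖ ≤ τ * (star x ⬝ᵥ (B *ᵥ x)).re := by
  exact skew_rayleigh_bound_on_deflated_space_general hB.posSemidef heig hbound
    (fun j k => horth j k) hx
end

section
/- (Disk bound.) Let μ, ρ be real numbers with 1 ≤ μ ≤ 2ρ² + 1 and ρ ≥ 0, and let Ω := {z ∈ ℂ : 1 ≤ Re z ≤ μ and |Im z| ≤ ρ}. Then for every k ∈ ℕ there exists a polynomial q of degree at most k with q(0) = 1 such that |q(z)| ≤ (ρ/√(1 + ρ²))^k for all z ∈ Ω. Consequently K_k(Ω) ≤ (ρ/√(1 + ρ²))^k. -/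
/-!
On a disk of radius `r` centered at `a ≠ 0`, the polynomial `(1 - z / a) ^ k = ((a - z) / a) ^ k` is
bounded by `(r / |a|) ^ k`. Among the disks centered at a real `c > 0` with the corners `1 ± iρ` on
the boundary, the ratio of the radius to `c` is least at `c = 1 + ρ²`, with value `ρ / √(1 + ρ²)`.
By symmetry about `Re z = 1 + ρ²` that circle also passes through `2ρ² + 1 ± iρ`, so the disk
contains the rectangle.
-/

/-- The GMRES min-max quantity on a set `Ω ⊂ ℂ`:
`K_k(Ω) = inf { sup_{z ∈ Ω} |q(z)| : q polynomial, deg q ≤ k, q(0) = 1 }`. -/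
noncomputable def Kminmax (k : ℕ) (Ω : Set ℂ) : ℝ :=
  sInf {r : ℝ | ∃ q : Polynomial ℂ, q.natDegree ≤ k ∧ q.eval 0 = 1 ∧
    r = sSup ((fun z : ℂ => ‖q.eval z‖) '' Ω)}

section

open Polynomial Metric Complex

theorem Kminmax_le {k : ℕ} {Ω : Set ℂ} {q : ℂ[X]} {B : ℝ} (hdeg : q.natDegree ≤ k)
    (hzero : q.eval 0 = 1) (hB : 0 ≤ B) (hbound : ∀ z ∈ Ω, ‖q.eval z‖ ≤ B) :
    Kminmax k Ω ≤ B := by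
  have hbdd : BddBelow {r : ℝ | ∃ p : ℂ[X], p.natDegree ≤ k ∧ p.eval 0 = 1 ∧
      r = sSup ((fun z : ℂ => ‖p.eval z‖) '' Ω)} := by
    refine ⟨0, ?_⟩
    rintro _ ⟨p, -, -, rfl⟩
    exact Real.sSup_nonneg (Set.forall_mem_image.2 fun z _ => norm_nonneg (p.eval z))
  calc Kminmax k Ω ≤ sSup ((fun z : ℂ => ‖q.eval z‖) '' Ω) :=
        csInf_le hbdd ⟨q, hdeg, hzero, rfl⟩
    _ ≤ B := Real.sSup_le (Set.forall_mem_image.2 hbound) hB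

/-- The polynomial `(1 - z / a) ^ k`, normalized at `0` and small on disks centered at `a`. It is
meant for `a ≠ 0`; for `a = 0` it is the constant `1`. -/
noncomputable def diskPolynomial {K : Type*} [Field K] (a : K) (k : ℕ) : K[X] :=
  (1 - C a⁻¹ * X) ^ k

theorem natDegree_diskPolynomial_le {K : Type*} [Field K] (a : K) (k : ℕ) :
    (diskPolynomial a k).natDegree ≤ k := by
  have hlinear : (1 - C a⁻¹ * X : K[X]).natDegree ≤ 1 := by compute_degree
  simpa only [diskPolynomial, mul_one] using natDegree_pow_le_of_le k hlinear

theorem eval_zero_diskPolynomial {K : Type*} [Field K] (a : K) (k : ℕ) :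
    (diskPolynomial a k).eval 0 = 1 := by
  simp [diskPolynomial]

theorem eval_diskPolynomial {K : Type*} [Field K] {a : K} (ha : a ≠ 0) (k : ℕ) (z : K) :
    (diskPolynomial a k).eval z = ((a - z) / a) ^ k := by
  simp only [diskPolynomial, eval_pow, eval_sub, eval_one, eval_mul, eval_C, eval_X]
  rw [sub_div, div_self ha, div_eq_inv_mul]

theorem norm_eval_diskPolynomial_le {K : Type*} [NormedField K] {a z : K} {r : ℝ} (ha : a ≠ 0)
    (hz : z ∈ closedBall a r) (k : ℕ) :
    ‖(diskPolynomial a k).eval z‖ ≤ (r / ‖a‖) ^ k := by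
  rw [eval_diskPolynomial ha, norm_pow, norm_div]
  gcongr
  exact mem_closedBall_iff_norm'.1 hz

theorem closedBall_reProdIm_closedBall_subset (c : ℂ) (a b : ℝ) :
    closedBall c.re a ×ℂ closedBall c.im b ⊆ closedBall c √(a ^ 2 + b ^ 2) := by
  rintro z ⟨hre, him⟩
  rw [mem_closedBall, dist_eq_re_im]
  have hre_sq : (z.re - c.re) ^ 2 ≤ a ^ 2 := sq_le_sq.2 (le_trans hre (le_abs_self a))
  have him_sq : (z.im - c.im) ^ 2 ≤ b ^ 2 := sq_le_sq.2 (le_trans him (le_abs_self b))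
  gcongr

theorem rectangle_subset_closedBall {μ ρ : ℝ} (hμ : μ ≤ 2 * ρ ^ 2 + 1) (hρ : 0 ≤ ρ) :
    {z : ℂ | 1 ≤ z.re ∧ z.re ≤ μ ∧ |z.im| ≤ ρ} ⊆
      closedBall ((1 + ρ ^ 2 : ℝ) : ℂ) (ρ * √(1 + ρ ^ 2)) := by
  have hradius : √((ρ ^ 2) ^ 2 + ρ ^ 2) = ρ * √(1 + ρ ^ 2) := by
    rw [show (ρ ^ 2) ^ 2 + ρ ^ 2 = ρ ^ 2 * (1 + ρ ^ 2) by ring, Real.sqrt_mul (sq_nonneg ρ),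
      Real.sqrt_sq hρ]
  rintro z ⟨hre_ge, hre_le, him⟩
  rw [← hradius]
  apply closedBall_reProdIm_closedBall_subset
  constructor
  · rw [Set.mem_preimage, ofReal_re, Real.closedBall_eq_Icc]
    constructor <;> linarith
  · rwa [Set.mem_preimage, ofReal_im, mem_closedBall_zero_iff, Real.norm_eq_abs]

end

/-- Disk bound: for the rectangle `Ω = [1, μ] + i[−ρ, ρ]` with
`1 ≤ μ ≤ 2ρ² + 1`, there is a polynomial `q` of degree at most `k` with `q(0) = 1` and
`|q(z)| ≤ (ρ/√(1+ρ²))^k` on `Ω`; consequently `K_k(Ω) ≤ (ρ/√(1+ρ²))^k`. -/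
theorem disk_bound (μ ρ : ℝ) (hμ1 : 1 ≤ μ) (hμ2 : μ ≤ 2 * ρ ^ 2 + 1) (hρ : 0 ≤ ρ)
    (k : ℕ) :
    (∃ q : Polynomial ℂ, q.natDegree ≤ k ∧ q.eval 0 = 1 ∧
      ∀ z : ℂ, 1 ≤ z.re → z.re ≤ μ → |z.im| ≤ ρ →
        ‖q.eval z‖ ≤ (ρ / Real.sqrt (1 + ρ ^ 2)) ^ k) ∧
    Kminmax k {z : ℂ | 1 ≤ z.re ∧ z.re ≤ μ ∧ |z.im| ≤ ρ} ≤
      (ρ / Real.sqrt (1 + ρ ^ 2)) ^ k := by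
  set Ω : Set ℂ := {z : ℂ | 1 ≤ z.re ∧ z.re ≤ μ ∧ |z.im| ≤ ρ}
  set q : Polynomial ℂ := diskPolynomial ((1 + ρ ^ 2 : ℝ) : ℂ) k
  have hcenter : 0 < 1 + ρ ^ 2 := by positivity
  have hratio : ρ * √(1 + ρ ^ 2) / ‖((1 + ρ ^ 2 : ℝ) : ℂ)‖ = ρ / √(1 + ρ ^ 2) := by
    rw [Complex.norm_of_nonneg hcenter.le, mul_div_assoc, Real.sqrt_div_self, div_eq_mul_inv]
  have hdeg : q.natDegree ≤ k := natDegree_diskPolynomial_le _ k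
  have hzero : q.eval 0 = 1 := eval_zero_diskPolynomial _ k
  have hbound : ∀ z ∈ Ω, ‖q.eval z‖ ≤ (ρ / √(1 + ρ ^ 2)) ^ k := fun z hz =>
    hratio ▸ norm_eval_diskPolynomial_le (Complex.ofReal_ne_zero.2 hcenter.ne')
      (rectangle_subset_closedBall hμ2 hρ hz) k
  exact ⟨⟨q, hdeg, hzero, fun z hre_ge hre_le him => hbound z ⟨hre_ge, hre_le, him⟩⟩,
    Kminmax_le hdeg hzero (by positivity) hbound⟩
end

section
/- (Elman bound.) Let μ, ρ be real numbers with μ ≥ 1 and ρ ≥ 0, and let Ω := {z ∈ ℂ : 1 ≤ Re z ≤ μ and |Im z| ≤ ρ}. Then for every k ∈ ℕ there exists a polynomial q of degree at most k with q(0) = 1 such that |q(z)| ≤ (1 − 1/(4(μ² + ρ²)))^{k/2} for all z ∈ Ω. Consequently K_k(Ω) ≤ (1 − 1/(4(μ² + ρ²)))^{k/2}. -/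
open Polynomial

theorem Kminmax_le_of_forall_norm_eval_le {k : ℕ} {Ω : Set ℂ} {q : ℂ[X]} {r : ℝ}
    (hΩ : Ω.Nonempty) (hdeg : q.natDegree ≤ k) (hq0 : q.eval 0 = 1)
    (hq : ∀ z ∈ Ω, ‖q.eval z‖ ≤ r) : Kminmax k Ω ≤ r := by
  have hbdd : BddBelow {s : ℝ | ∃ p : ℂ[X], p.natDegree ≤ k ∧ p.eval 0 = 1 ∧
      s = sSup ((fun z : ℂ => ‖p.eval z‖) '' Ω)} := by
    refine ⟨0, ?_⟩
    rintro _ ⟨p, -, -, rfl⟩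
    exact Real.sSup_nonneg (Set.forall_mem_image.2 fun z _ => norm_nonneg _)
  calc Kminmax k Ω
      ≤ sSup ((fun z : ℂ => ‖q.eval z‖) '' Ω) := csInf_le hbdd ⟨q, hdeg, hq0, rfl⟩
    _ ≤ r := csSup_le (hΩ.image _) (Set.forall_mem_image.2 hq)

section RichardsonResidual

variable {A : Type*} [CommRing A]

/-- The residual polynomial `(1 - a X)ᵏ` of `k` steps of Richardson iteration with relaxation
parameter `a`, the competitor in the min-max problem. -/
noncomputable def richardsonResidual (a : A) (k : ℕ) : A[X] :=
  (1 - C a * X) ^ k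

theorem natDegree_richardsonResidual_le (a : A) (k : ℕ) :
    (richardsonResidual a k).natDegree ≤ k := by
  have hlin : (1 - C a * X).natDegree ≤ 1 := by compute_degree
  simpa only [richardsonResidual, mul_one] using natDegree_pow_le_of_le k hlin

theorem eval_richardsonResidual (a : A) (k : ℕ) (z : A) :
    (richardsonResidual a k).eval z = (1 - a * z) ^ k := by
  simp [richardsonResidual]

end RichardsonResidual

theorem norm_one_sub_ofReal_mul_sq (a : ℝ) (z : ℂ) :
    ‖1 - a * z‖ ^ 2 = 1 - 2 * a * z.re + a ^ 2 * ‖z‖ ^ 2 := by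
  simp only [Complex.sq_norm, Complex.normSq_apply, Complex.sub_re, Complex.sub_im,
    Complex.one_re, Complex.one_im, Complex.re_ofReal_mul, Complex.im_ofReal_mul]
  ring

theorem norm_one_sub_div_sq_mul_le_sqrt {δ R : ℝ} {z : ℂ} (hδ : 0 < δ)
    (hre : δ ≤ z.re) (hnorm : ‖z‖ ≤ R) :
    ‖1 - (δ / R ^ 2 : ℝ) * z‖ ≤ √(1 - (δ / R) ^ 2) := by
  have hR : 0 < R := hδ.trans_le (hre.trans ((Complex.re_le_norm z).trans hnorm))
  apply Real.le_sqrt_of_sq_le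
  calc ‖1 - (δ / R ^ 2 : ℝ) * z‖ ^ 2
      = 1 - 2 * (δ / R ^ 2) * z.re + (δ / R ^ 2) ^ 2 * ‖z‖ ^ 2 :=
        norm_one_sub_ofReal_mul_sq _ z
    _ ≤ 1 - 2 * (δ / R ^ 2) * δ + (δ / R ^ 2) ^ 2 * R ^ 2 := by gcongr
    _ = 1 - (δ / R) ^ 2 := by field_simp; ring

theorem norm_eval_richardsonResidual_le {δ R : ℝ} {z : ℂ} (hδ : 0 < δ)
    (hre : δ ≤ z.re) (hnorm : ‖z‖ ≤ R) (k : ℕ) :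
    ‖(richardsonResidual ((δ / R ^ 2 : ℝ) : ℂ) k).eval z‖ ≤
      (1 - (δ / R) ^ 2) ^ ((k : ℝ) / 2) := by
  have hδR : δ ≤ R := hre.trans ((Complex.re_le_norm z).trans hnorm)
  have hR : 0 < R := hδ.trans_le hδR
  have hbase : 0 ≤ 1 - (δ / R) ^ 2 :=
    sub_nonneg.2 (pow_le_one₀ (by positivity) ((div_le_one hR).2 hδR))
  rw [eval_richardsonResidual, norm_pow, Real.rpow_div_two_eq_sqrt _ hbase, Real.rpow_natCast]
  exact pow_le_pow_left₀ (norm_nonneg _) (norm_one_sub_div_sq_mul_le_sqrt hδ hre hnorm) k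

theorem elman_bound_general {Ω : Set ℂ} {δ R : ℝ} (hΩ : Ω.Nonempty) (hδ : 0 < δ)
    (hre : ∀ z ∈ Ω, δ ≤ z.re) (hnorm : ∀ z ∈ Ω, ‖z‖ ≤ R) (k : ℕ) :
    (∃ q : ℂ[X], q.natDegree ≤ k ∧ q.eval 0 = 1 ∧
      ∀ z ∈ Ω, ‖q.eval z‖ ≤ (1 - (δ / R) ^ 2) ^ ((k : ℝ) / 2)) ∧
    Kminmax k Ω ≤ (1 - (δ / R) ^ 2) ^ ((k : ℝ) / 2) := by
  have hdeg := natDegree_richardsonResidual_le ((δ / R ^ 2 : ℝ) : ℂ) k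
  have hzero : (richardsonResidual ((δ / R ^ 2 : ℝ) : ℂ) k).eval 0 = 1 := by
    rw [eval_richardsonResidual, mul_zero, sub_zero, one_pow]
  have hbound := fun z hz => norm_eval_richardsonResidual_le hδ (hre z hz) (hnorm z hz) k
  exact ⟨⟨_, hdeg, hzero, hbound⟩, Kminmax_le_of_forall_norm_eval_le hΩ hdeg hzero hbound⟩

theorem norm_le_sqrt_of_abs_re_le_of_abs_im_le {z : ℂ} {a b : ℝ}
    (hre : |z.re| ≤ a) (him : |z.im| ≤ b) : ‖z‖ ≤ √(a ^ 2 + b ^ 2) := by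
  rw [Complex.norm_eq_sqrt_sq_add_sq, ← sq_abs z.re, ← sq_abs z.im]
  gcongr

theorem one_sub_one_div_sqrt_sq_rpow_le {M s : ℝ} (hM : 1 ≤ M) (hs : 0 ≤ s) :
    (1 - (1 / √M) ^ 2) ^ s ≤ (1 - 1 / (4 * M)) ^ s := by
  have hsq : (1 / √M) ^ 2 = 1 / M := by
    rw [div_pow, one_pow, Real.sq_sqrt (zero_le_one.trans hM)]
  have hnonneg : 0 ≤ 1 - 1 / M := sub_nonneg.2 ((div_le_one (zero_lt_one.trans_le hM)).2 hM)
  rw [hsq]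
  gcongr
  linarith

/-- Elman bound: for the rectangle `Ω = [1, μ] + i[−ρ, ρ]` with `μ ≥ 1`,
`ρ ≥ 0`, there is a polynomial `q` of degree at most `k` with `q(0) = 1` and
`|q(z)| ≤ (1 − 1/(4(μ² + ρ²)))^{k/2}` on `Ω`; consequently
`K_k(Ω) ≤ (1 − 1/(4(μ² + ρ²)))^{k/2}`. -/
theorem elman_bound (μ ρ : ℝ) (hμ : 1 ≤ μ) (hρ : 0 ≤ ρ) (k : ℕ) :
    (∃ q : Polynomial ℂ, q.natDegree ≤ k ∧ q.eval 0 = 1 ∧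
      ∀ z : ℂ, 1 ≤ z.re → z.re ≤ μ → |z.im| ≤ ρ →
        ‖q.eval z‖ ≤
          (1 - 1 / (4 * (μ ^ 2 + ρ ^ 2))) ^ ((k : ℝ) / 2)) ∧
    Kminmax k {z : ℂ | 1 ≤ z.re ∧ z.re ≤ μ ∧ |z.im| ≤ ρ} ≤
      (1 - 1 / (4 * (μ ^ 2 + ρ ^ 2))) ^ ((k : ℝ) / 2) := by
  have hrate := one_sub_one_div_sqrt_sq_rpow_le (M := μ ^ 2 + ρ ^ 2) (s := (k : ℝ) / 2)
    (le_add_of_le_of_nonneg (one_le_pow₀ hμ) (sq_nonneg ρ)) (by positivity)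
  obtain ⟨⟨q, hdeg, hq0, hq⟩, hK⟩ := elman_bound_general
    (Ω := {z : ℂ | 1 ≤ z.re ∧ z.re ≤ μ ∧ |z.im| ≤ ρ}) (δ := 1) (R := √(μ ^ 2 + ρ ^ 2))
    ⟨1, by simp [hμ, hρ]⟩ one_pos (fun z hz => hz.1)
    (fun z ⟨hre, hreμ, him⟩ => norm_le_sqrt_of_abs_re_le_of_abs_im_le
      ((abs_of_pos (one_pos.trans_le hre)).trans_le hreμ) him) k
  exact ⟨⟨q, hdeg, hq0, fun z hre hreμ him => (hq z ⟨hre, hreμ, him⟩).trans hrate⟩,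
    hK.trans hrate⟩
end
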